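/- arXiv:2508.00480 — 2 statements merged into one kernel-verified Lean document; each statement's English description precedes it below -/
import Mathlib

section
/- Let F be a fixed graph with no isolated vertices and at least one edge. For each ν > 0, there exist γ > 0 and d₀ such that the following holds for each n ≥ d ≥ d₀: every n-vertex graph G in which every vertex v satisfies (1 − γ)d ≤ deg_G(v) ≤ (1 + γ)d contains a collection of pairwise vertex-disjoint subgraphs, each of which is a subdivision of F, whose vertex sets together cover at least (1 − ν)n vertices of G. -/
open SimpleGraph

/-- `w` is an internal vertex of the walk `p` (on its support but not an endvertex). -/
def SimpleGraph.Walk.IsInternalVertex {β : Type*} {G : SimpleGraph β} {x y : β}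
    (p : G.Walk x y) (w : β) : Prop :=
  w ∈ p.support ∧ w ≠ x ∧ w ≠ y

/-- `F.IsSubdivisionP G lenOK` says that `G` is a subdivision of `F` in which the length of
each subdivision-path satisfies the predicate `lenOK`: there is an injection `f` of the
vertices of `F` into the vertices of `G` and, for each edge `uv` of `F`, a path of positive
length in `G` from `f u` to `f v`, these paths being pairwise internally vertex-disjoint with
all internal vertices outside the range of `f`, such that every vertex of `G` is in the range
of `f` or on one of the paths, and every edge of `G` is an edge of one of the paths. -/
def SimpleGraph.IsSubdivisionP {α β : Type*} (F : SimpleGraph α) (G : SimpleGraph β)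
    (lenOK : ℕ → Prop) : Prop :=
  ∃ (f : α → β) (P : ∀ u v : α, F.Adj u v → G.Walk (f u) (f v)),
    Function.Injective f ∧
    (∀ u v (h : F.Adj u v), (P u v h).IsPath) ∧
    (∀ u v (h : F.Adj u v), 0 < (P u v h).length ∧ lenOK (P u v h).length) ∧
    (∀ u v (h : F.Adj u v), P v u h.symm = (P u v h).reverse) ∧
    (∀ u v (h : F.Adj u v) (w : β), (P u v h).IsInternalVertex w → w ∉ Set.range f) ∧
    (∀ u v u' v' (h : F.Adj u v) (h' : F.Adj u' v'), s(u, v) ≠ s(u', v') →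
      ∀ w : β, (P u v h).IsInternalVertex w → ¬ (P u' v' h').IsInternalVertex w) ∧
    (∀ w : β, w ∈ Set.range f ∨ ∃ u v, ∃ h : F.Adj u v, w ∈ (P u v h).support) ∧
    (∀ x y : β, G.Adj x y → ∃ u v, ∃ h : F.Adj u v, s(x, y) ∈ (P u v h).edges)

/-- `G` is a subdivision of `F`. -/
def SimpleGraph.IsSubdivision {α β : Type*} (F : SimpleGraph α) (G : SimpleGraph β) : Prop :=
  F.IsSubdivisionP G fun _ => True

/-!
Colour the vertices at random with `m + k ℓ` colours. As `G` is nearly regular of large degree,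
nearly every vertex has about its expected number of neighbours in every colour class. Hence, by
the deficiency version of Hall's theorem, consecutive classes in each of `k` cyclic bundles of `ℓ`
classes are almost perfectly matched, and following the matchings gives disjoint paths on `ℓ`
vertices that cover almost everything outside the `m` remaining classes, the reservoirs.

A maximal packing built from these paths and the reservoirs leaves only few paths unused. Otherwise
choose the reservoir least touched by the packing: most unused paths have, close to both ends,
vertices with many unused neighbours in it. Such a path can serve as a subdivided edge between
two vertices of the reservoir in many ways. The paths far outnumber the vertices of the reservoir,
so the auxiliary graph of these edges is dense, by Mader's theorem it contains a subdivision of `F`,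
and replacing its edges by paths of `G` enlarges the packing. Each subdivision covers all but
small end parts of every path it uses, so the packing covers almost all vertices.
-/

namespace SubdivisionPacking

open scoped Classical Finset

variable {α β V : Type*} {F : SimpleGraph α} {B : SimpleGraph β} {G : SimpleGraph V}

/-- The data of a subdivision of `F` inside `G`: the branch vertices and, for each edge of `F`, the
path of `G` that replaces it, as a subgraph. Indexing the paths by unordered pairs makes them
symmetric in the two ends; `path e` is only relevant when `e` is an edge of `F`. -/
structure SubdivisionModel (F : SimpleGraph α) (G : SimpleGraph V) where
  branch : α → V
  branch_injective : Function.Injective branch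
  path : Sym2 α → G.Subgraph
  exists_isPath : ∀ u v, F.Adj u v →
    ∃ p : G.Walk (branch u) (branch v), p.IsPath ∧ p.toSubgraph = path s(u, v)
  mem_of_branch_mem : ∀ e ∈ F.edgeSet, ∀ a, branch a ∈ (path e).verts → a ∈ e
  inter_subset_range : ∀ e ∈ F.edgeSet, ∀ e' ∈ F.edgeSet, e ≠ e' →
    (path e).verts ∩ (path e').verts ⊆ Set.range branch

namespace SubdivisionModel

/-- The subgraph of `G` obtained from a subgraph `S` of `F` by replacing its edges by the paths of
the model. -/
def substitute (M : SubdivisionModel F G) (S : F.Subgraph) : G.Subgraph where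
  verts := M.branch '' S.verts ∪ ⋃ e ∈ S.edgeSet, (M.path e).verts
  Adj x y := ∃ e ∈ S.edgeSet, (M.path e).Adj x y
  adj_sub := fun ⟨_, _, h⟩ => h.adj_sub
  edge_vert := fun ⟨_, he, h⟩ => Or.inr (Set.mem_biUnion he h.fst_mem)
  symm := ⟨fun _ _ ⟨e, he, h⟩ => ⟨e, he, h.symm⟩⟩

/-- The subgraph of `G` formed by all branch vertices and all paths of a model. -/
def toSubgraph (M : SubdivisionModel F G) : G.Subgraph := M.substitute ⊤

lemma verts_toSubgraph (M : SubdivisionModel F G) :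
    M.toSubgraph.verts = Set.range M.branch ∪ ⋃ e ∈ F.edgeSet, (M.path e).verts :=
  congrArg₂ (· ∪ ·) Set.image_univ rfl

lemma path_le_toSubgraph (M : SubdivisionModel F G) {e : Sym2 α} (he : e ∈ F.edgeSet) :
    M.path e ≤ M.toSubgraph :=
  ⟨fun _ hw => Or.inr (Set.mem_biUnion he hw), fun _ _ h => ⟨e, he, h⟩⟩

lemma branch_mem_verts (M : SubdivisionModel F G) (a : α) : M.branch a ∈ M.toSubgraph.verts :=
  Or.inl ⟨a, trivial, rfl⟩

end SubdivisionModel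

lemma exists_symmetric_walk_choice {f : α → V} (Φ : ∀ u v, G.Walk (f u) (f v) → Prop)
    (exists_walk : ∀ u v, F.Adj u v → ∃ p, Φ u v p)
    (reverse : ∀ u v p, Φ u v p → Φ v u p.reverse) :
    ∃ P : ∀ u v, F.Adj u v → G.Walk (f u) (f v), (∀ u v h, Φ u v (P u v h)) ∧
      ∀ u v h, P v u h.symm = (P u v h).reverse := by
  let _ : LinearOrder α := linearOrderOfSTO WellOrderingRel
  choose q hq using exists_walk
  refine ⟨fun u v h => if u < v then q u v h else (q v u h.symm).reverse, fun u v h => ?_,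
    fun u v h => ?_⟩
  · dsimp only
    split_ifs
    · exact hq u v h
    · exact reverse _ _ _ (hq v u h.symm)
  · dsimp only
    rcases lt_trichotomy u v with huv | huv | huv
    · rw [if_neg huv.not_gt, if_pos huv]
    · exact absurd huv h.ne
    · rw [if_pos huv, if_neg huv.not_gt, Walk.reverse_reverse]

lemma exists_walk_map_hom_eq {H : G.Subgraph} {x y : V} (p : G.Walk x y) (hp : p.toSubgraph ≤ H)
    (hx : x ∈ H.verts) (hy : y ∈ H.verts) :
    ∃ q : H.coe.Walk ⟨x, hx⟩ ⟨y, hy⟩, q.map H.hom = p :=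
  ⟨p.mapToSubgraph.map (Subgraph.inclusion hp),
    (Walk.map_map _ _ _).trans p.map_mapToSubgraph_hom⟩

namespace SubdivisionModel

lemma exists_symmetric_walks (M : SubdivisionModel F G) :
    ∃ P : ∀ u v, F.Adj u v → M.toSubgraph.coe.Walk ⟨M.branch u, M.branch_mem_verts u⟩
        ⟨M.branch v, M.branch_mem_verts v⟩,
      (∀ u v h, (P u v h).IsPath ∧
        ((P u v h).map M.toSubgraph.hom).toSubgraph = M.path s(u, v)) ∧
      ∀ u v h, P v u h.symm = (P u v h).reverse := by
  refine exists_symmetric_walk_choice (f := fun u => (⟨M.branch u, M.branch_mem_verts u⟩ :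
    M.toSubgraph.verts)) (fun u v p => p.IsPath ∧ (p.map M.toSubgraph.hom).toSubgraph =
      M.path s(u, v)) (fun u v h => ?_) (fun u v p hp => ?_)
  · obtain ⟨p, hp, hpath⟩ := M.exists_isPath u v h
    obtain ⟨q, rfl⟩ := exists_walk_map_hom_eq p (hpath.trans_le (M.path_le_toSubgraph h))
      (M.branch_mem_verts u) (M.branch_mem_verts v)
    exact ⟨q, hp.of_map, hpath⟩
  · refine ⟨hp.1.reverse, ?_⟩
    rw [← Walk.reverse_map, Walk.toSubgraph_reverse, hp.2, Sym2.eq_swap]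

theorem isSubdivision (M : SubdivisionModel F G) : F.IsSubdivision M.toSubgraph.coe := by
  obtain ⟨P, hP, hsymm⟩ := M.exists_symmetric_walks
  have mem_support : ∀ u v h (w : M.toSubgraph.verts),
      w ∈ (P u v h).support ↔ (w : V) ∈ (M.path s(u, v)).verts := fun u v h w => by
    rw [← (hP u v h).2, Walk.mem_verts_toSubgraph, Walk.support_map]
    exact (List.mem_map_of_injective Subgraph.hom_injective).symm
  have mem_edges : ∀ u v h (x y : M.toSubgraph.verts),
      (M.path s(u, v)).Adj x y → s(x, y) ∈ (P u v h).edges := fun u v h x y hxy => by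
    rw [← (hP u v h).2, Walk.adj_toSubgraph_iff_mem_edges, Walk.edges_map] at hxy
    exact (List.mem_map_of_injective (Sym2.map.injective Subgraph.hom_injective)).1 hxy
  have branch_not_internal : ∀ u v h a,
      ¬ (P u v h).IsInternalVertex ⟨M.branch a, M.branch_mem_verts a⟩ := by
    rintro u v h a ⟨hw, hu, hv⟩
    rcases Sym2.mem_iff.1 (M.mem_of_branch_mem _ h a ((mem_support u v h _).1 hw)) with rfl | rfl
    exacts [hu rfl, hv rfl]
  refine ⟨_, P, fun a b hab => M.branch_injective (Subtype.mk.inj hab), fun u v h => (hP u v h).1,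
    fun u v h => ⟨?_, trivial⟩, hsymm, ?_, fun u v u' v' h h' hne w hw hw' => ?_, ?_, ?_⟩
  · exact Nat.pos_of_ne_zero fun h0 =>
      h.ne (M.branch_injective (Subtype.mk.inj (Walk.eq_of_length_eq_zero h0)))
  · rintro u v h _ hw ⟨a, rfl⟩
    exact branch_not_internal u v h a hw
  · obtain ⟨a, ha⟩ := M.inter_subset_range _ h _ h' hne
      ⟨(mem_support u v h w).1 hw.1, (mem_support u' v' h' w).1 hw'.1⟩
    obtain rfl : ⟨M.branch a, M.branch_mem_verts a⟩ = w := Subtype.ext ha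
    exact branch_not_internal u v h a hw
  · rintro ⟨w, ⟨a, -, rfl⟩ | hw⟩
    · exact Or.inl ⟨a, rfl⟩
    · obtain ⟨e, he, hw⟩ := Set.mem_iUnion₂.1 hw
      induction e using Sym2.ind with
      | _ u v => exact Or.inr ⟨u, v, he, (mem_support u v he _).2 hw⟩
  · rintro x y ⟨e, he, hxy⟩
    induction e using Sym2.ind with
    | _ u v => exact ⟨u, v, he, mem_edges u v he x y hxy⟩

end SubdivisionModel

section Composition

lemma isPath_append {x y z : V} {p : G.Walk x y} {q : G.Walk y z} (hp : p.IsPath) (hq : q.IsPath)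
    (h : ∀ w, w ∈ p.support → w ∈ q.support → w = y) : (p.append q).IsPath := by
  rw [Walk.isPath_def, Walk.support_append, List.nodup_append]
  have hq' := hq.support_nodup
  rw [← Walk.cons_tail_support, List.nodup_cons] at hq'
  refine ⟨hp.support_nodup, hq'.2, fun a ha b hb hab => ?_⟩
  subst hab
  exact hq'.1 (h a ha (List.mem_of_mem_tail hb) ▸ hb)

namespace SubdivisionModel

lemma branch_mem_path (M : SubdivisionModel F G) {e : Sym2 α} (he : e ∈ F.edgeSet) {a : α}
    (ha : a ∈ e) : M.branch a ∈ (M.path e).verts := by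
  induction e using Sym2.ind with
  | _ u v =>
    obtain ⟨p, -, hp⟩ := M.exists_isPath u v he
    rw [← hp]
    rcases Sym2.mem_iff.1 ha with rfl | rfl
    exacts [p.start_mem_verts_toSubgraph, p.end_mem_verts_toSubgraph]

lemma branch_mem_substitute (M : SubdivisionModel F G) {S : F.Subgraph} {a : α} :
    M.branch a ∈ (M.substitute S).verts ↔ a ∈ S.verts := by
  refine ⟨?_, fun ha => Or.inl ⟨a, ha, rfl⟩⟩
  rintro (⟨b, hb, hab⟩ | h)
  · exact M.branch_injective hab ▸ hb
  · obtain ⟨e, he, ha⟩ := Set.mem_iUnion₂.1 h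
    exact S.mem_verts_of_mem_edge he (M.mem_of_branch_mem e (S.edgeSet_subset he) a ha)

lemma eq_of_mem_path_inter (M : SubdivisionModel F G) {e e' : Sym2 α} (he : e ∈ F.edgeSet)
    (he' : e' ∈ F.edgeSet) {x y : V} (hxy : x ≠ y) (hx : x ∈ (M.path e).verts ∩ (M.path e').verts)
    (hy : y ∈ (M.path e).verts ∩ (M.path e').verts) : e = e' := by
  by_contra hne
  obtain ⟨a, rfl⟩ := M.inter_subset_range e he e' he' hne hx
  obtain ⟨b, rfl⟩ := M.inter_subset_range e he e' he' hne hy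
  have hab : a ≠ b := fun h => hxy (congrArg M.branch h)
  exact hne <| Sym2.eq_of_ne_mem hab (M.mem_of_branch_mem e he a hx.1)
    (M.mem_of_branch_mem e he b hy.1) (M.mem_of_branch_mem e' he' a hx.2)
    (M.mem_of_branch_mem e' he' b hy.2)

lemma disjoint_edgeSet_path (M : SubdivisionModel F G) {e e' : Sym2 α} (he : e ∈ F.edgeSet)
    (he' : e' ∈ F.edgeSet) (hne : e ≠ e') : Disjoint (M.path e).edgeSet (M.path e').edgeSet := by
  refine Set.disjoint_left.2 fun s hs hs' => ?_
  induction s using Sym2.ind with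
  | _ x y =>
    rw [Subgraph.mem_edgeSet] at hs hs'
    exact hne (M.eq_of_mem_path_inter he he' hs.ne ⟨hs.fst_mem, hs'.fst_mem⟩
      ⟨hs.snd_mem, hs'.snd_mem⟩)

lemma substitute_inter_subset (M : SubdivisionModel F G) {S T : F.Subgraph}
    (h : Disjoint S.edgeSet T.edgeSet) :
    (M.substitute S).verts ∩ (M.substitute T).verts ⊆ M.branch '' (S.verts ∩ T.verts) := by
  have image_of_mem_range : ∀ w ∈ (M.substitute S).verts ∩ (M.substitute T).verts,
      w ∈ Set.range M.branch → w ∈ M.branch '' (S.verts ∩ T.verts) := by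
    rintro _ ⟨hS, hT⟩ ⟨a, rfl⟩
    exact ⟨a, ⟨M.branch_mem_substitute.1 hS, M.branch_mem_substitute.1 hT⟩, rfl⟩
  rintro w ⟨hS, hT⟩
  refine image_of_mem_range w ⟨hS, hT⟩ ?_
  rcases hS with ⟨a, -, rfl⟩ | hS
  · exact ⟨a, rfl⟩
  rcases hT with ⟨a, -, rfl⟩ | hT
  · exact ⟨a, rfl⟩
  obtain ⟨e, he, hwe⟩ := Set.mem_iUnion₂.1 hS
  obtain ⟨e', he', hwe'⟩ := Set.mem_iUnion₂.1 hT
  exact M.inter_subset_range e (S.edgeSet_subset he) e' (T.edgeSet_subset he')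
    (h.ne_of_mem he he') ⟨hwe, hwe'⟩

lemma substitute_sup (M : SubdivisionModel F G) (S T : F.Subgraph) :
    M.substitute (S ⊔ T) = M.substitute S ⊔ M.substitute T := by
  ext x y
  · simp only [substitute, Subgraph.verts_sup, Subgraph.edgeSet_sup, Set.image_union,
      Set.mem_union, Set.iUnion_or, Set.iUnion_union_distrib]
    tauto
  · simp only [substitute, Subgraph.sup_adj, Subgraph.edgeSet_sup, Set.mem_union, or_and_right,
      exists_or]

lemma substitute_singletonSubgraph (M : SubdivisionModel F G) (a : α) :
    M.substitute (F.singletonSubgraph a) = G.singletonSubgraph (M.branch a) := by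
  ext <;> simp [substitute]

lemma substitute_subgraphOfAdj (M : SubdivisionModel F G) {u v : α} (h : F.Adj u v) :
    M.substitute (F.subgraphOfAdj h) = M.path s(u, v) := by
  ext x y
  · have hu := M.branch_mem_path h (Sym2.mem_mk_left u v)
    have hv := M.branch_mem_path h (Sym2.mem_mk_right u v)
    simp only [substitute, edgeSet_subgraphOfAdj, subgraphOfAdj_verts, Set.biUnion_singleton,
      Set.image_pair]
    rw [Set.union_eq_self_of_subset_left (Set.pair_subset hu hv)]
  · simp [substitute]

lemma exists_isPath_substitute (M : SubdivisionModel F G) {u v : α} (p : F.Walk u v)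
    (hp : p.IsPath) : ∃ q : G.Walk (M.branch u) (M.branch v), q.IsPath ∧
      q.toSubgraph = M.substitute p.toSubgraph := by
  induction p with
  | nil => exact ⟨Walk.nil, .nil, (M.substitute_singletonSubgraph _).symm⟩
  | @cons a b c h p ih =>
    rw [Walk.cons_isPath_iff] at hp
    obtain ⟨q, hq, hq_eq⟩ := ih hp.1
    obtain ⟨r, hr, hr_eq⟩ := M.exists_isPath a b h
    rw [← M.substitute_subgraphOfAdj h] at hr_eq
    have edge_disjoint : Disjoint (F.subgraphOfAdj h).edgeSet p.toSubgraph.edgeSet := by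
      rw [edgeSet_subgraphOfAdj, Set.disjoint_singleton_left, Walk.mem_edges_toSubgraph]
      exact fun he => hp.2 (p.fst_mem_support_of_mem_edges he)
    refine ⟨r.append q, isPath_append hr hq fun w hwr hwq => ?_, ?_⟩
    · rw [← Walk.mem_verts_toSubgraph, hr_eq] at hwr
      rw [← Walk.mem_verts_toSubgraph, hq_eq] at hwq
      obtain ⟨z, ⟨rfl | rfl, hzp⟩, rfl⟩ := M.substitute_inter_subset edge_disjoint ⟨hwr, hwq⟩
      · exact absurd (p.mem_verts_toSubgraph.1 hzp) hp.2
      · rfl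
    · rw [Walk.toSubgraph_append, Walk.toSubgraph, substitute_sup, hr_eq, hq_eq]

/-- Composition of models: a subdivision of a subdivision of `F` is a subdivision of `F`. -/
def comp (N : SubdivisionModel B G) (M : SubdivisionModel F B) : SubdivisionModel F G where
  branch := N.branch ∘ M.branch
  branch_injective := N.branch_injective.comp M.branch_injective
  path e := N.substitute (M.path e)
  exists_isPath u v h := by
    obtain ⟨p, hp, hpath⟩ := M.exists_isPath u v h
    exact hpath ▸ N.exists_isPath_substitute p hp
  mem_of_branch_mem e he a ha := M.mem_of_branch_mem e he a (N.branch_mem_substitute.1 ha)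
  inter_subset_range e he e' he' hne := by
    refine (N.substitute_inter_subset (M.disjoint_edgeSet_path he he' hne)).trans ?_
    rw [Set.range_comp]
    exact Set.image_mono (M.inter_subset_range e he e' he' hne)

lemma edgeSet_substitute (M : SubdivisionModel F G) (S : F.Subgraph) :
    (M.substitute S).edgeSet = ⋃ e ∈ S.edgeSet, (M.path e).edgeSet := by
  ext s
  induction s using Sym2.ind with
  | _ x y => simp [substitute]

lemma toSubgraph_comp (N : SubdivisionModel B G) (M : SubdivisionModel F B) :
    (N.comp M).toSubgraph = N.substitute M.toSubgraph := by
  ext x y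
  · rw [verts_toSubgraph]
    simp only [comp, substitute, verts_toSubgraph, Set.image_union, Set.image_iUnion₂,
      ← Set.range_comp, Set.iUnion_union_distrib]
    rw [Set.union_assoc, toSubgraph, edgeSet_substitute]
    simp only [Set.biUnion_iUnion]
    rfl
  · rw [toSubgraph, toSubgraph, ← Subgraph.mem_edgeSet, ← Subgraph.mem_edgeSet]
    simp only [edgeSet_substitute, comp, Set.biUnion_iUnion]

end SubdivisionModel

end Composition

section Contraction

/-- The number of neighbours of `v` in `W`. -/
noncomputable def degreeIn (A : SimpleGraph V) (W : Finset V) (v : V) : ℕ := #{u ∈ W | A.Adj v u}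

/-- Twice the number of edges of `A` with both ends in `W`. -/
noncomputable def degreeSum (A : SimpleGraph V) (W : Finset V) : ℕ := ∑ v ∈ W, degreeIn A W v

/-- The vertices of `W` outside `U` that have a neighbour in `U`. -/
noncomputable def outerNeighbors (A : SimpleGraph V) (W U : Finset V) : Finset V :=
  {v ∈ W \ U | ∃ u ∈ U, A.Adj u v}

/-- `U` is a connected subset of `W` whose contraction to one vertex leaves at least `K / 2` edges
per vertex: the contracted graph has `#(W \ U) + 1` vertices, and its edges are those inside `W \ U`
together with one to each outer neighbour of `U`. -/
structure IsContractible (A : SimpleGraph V) (W : Finset V) (K : ℕ) (U : Finset V) : Prop where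
  subset : U ⊆ W
  connected : (A.induce (U : Set V)).Connected
  dense : K * (#(W \ U) + 1) ≤ degreeSum A (W \ U) + 2 * #(outerNeighbors A W U)

variable {A : SimpleGraph V} {W U : Finset V} {C K : ℕ} {v : V}

lemma mul_card_le_degreeSum (h : ∀ v ∈ W, C ≤ degreeIn A W v) : C * #W ≤ degreeSum A W := by
  rw [mul_comm, ← smul_eq_mul]
  exact Finset.card_nsmul_le_sum _ _ _ h

lemma degreeSum_le_card_mul_card : degreeSum A W ≤ #W * #W :=
  Finset.sum_le_card_nsmul _ _ _ fun _ _ => Finset.card_filter_le _ _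

lemma degreeSum_erase (hv : v ∈ W) :
    degreeSum A (W.erase v) + 2 * degreeIn A W v = degreeSum A W := by
  have degreeIn_split : ∀ x ∈ W.erase v,
      degreeIn A W x = degreeIn A (W.erase v) x + if A.Adj v x then 1 else 0 := fun x _ => by
    unfold degreeIn
    conv_lhs => rw [← Finset.insert_erase hv, Finset.filter_insert]
    rw [A.adj_comm v x]
    split_ifs
    · rw [Finset.card_insert_of_notMem (by simp)]
    · rw [add_zero]
  have degreeIn_erase : ∑ x ∈ W.erase v, (if A.Adj v x then 1 else 0) = degreeIn A W v := by
    rw [← Finset.card_filter, Finset.filter_erase, Finset.erase_eq_of_notMem (by simp), degreeIn]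
  unfold degreeSum
  rw [← Finset.add_sum_erase W _ hv, Finset.sum_congr rfl degreeIn_split, Finset.sum_add_distrib,
    degreeIn_erase]
  ring

lemma card_outerNeighbors_insert (hv : v ∈ outerNeighbors A W U) :
    #(outerNeighbors A W U) + degreeIn A (W \ U) v ≤
      #(outerNeighbors A W (insert v U)) + 1 + degreeIn A (outerNeighbors A W U) v := by
  set N := outerNeighbors A W U
  have new_outer : N.erase v ∪ ({x ∈ W \ U | A.Adj v x} \ N) ⊆
      outerNeighbors A W (insert v U) := by
    intro x hx
    simp only [N, outerNeighbors, Finset.mem_union, Finset.mem_erase, Finset.mem_sdiff,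
      Finset.mem_filter, Finset.mem_insert, exists_eq_or_imp] at hx ⊢
    rcases hx with ⟨hxv, ⟨hxW, hxU⟩, hadj⟩ | ⟨⟨⟨hxW, hxU⟩, hvx⟩, -⟩
    · exact ⟨⟨hxW, not_or.2 ⟨hxv, hxU⟩⟩, Or.inr hadj⟩
    · exact ⟨⟨hxW, not_or.2 ⟨hvx.ne', hxU⟩⟩, Or.inl hvx⟩
  have hdisj : Disjoint (N.erase v) ({x ∈ W \ U | A.Adj v x} \ N) :=
    Finset.disjoint_sdiff.mono_left (Finset.erase_subset _ _)
  have inter_eq : ({x ∈ W \ U | A.Adj v x} ∩ N) = {x ∈ N | A.Adj v x} := by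
    rw [Finset.filter_inter]
    exact congrArg _ (Finset.inter_eq_right.2 (Finset.filter_subset _ _))
  have hcard := Finset.card_le_card new_outer
  rw [Finset.card_union_of_disjoint hdisj] at hcard
  have h_erase := Finset.card_erase_add_one hv
  have h_split := Finset.card_sdiff_add_card_inter {x ∈ W \ U | A.Adj v x} N
  rw [inter_eq] at h_split
  unfold degreeIn
  omega

lemma isContractible_singleton (hv : v ∈ W) (hdense : K * #W ≤ degreeSum A W) :
    IsContractible A W K {v} where
  subset := Finset.singleton_subset_iff.2 hv
  connected := by
    rw [Finset.coe_singleton]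
    exact ⟨.of_subsingleton⟩
  dense := by
    have h_outer : #(outerNeighbors A W {v}) = degreeIn A W v := by
      unfold outerNeighbors degreeIn
      congr 1
      ext x
      simp only [Finset.mem_filter, Finset.mem_sdiff, Finset.mem_singleton, exists_eq_left]
      exact ⟨fun h => ⟨h.1.1, h.2⟩, fun h => ⟨⟨h.1, h.2.ne'⟩, h.2⟩⟩
    rwa [h_outer, Finset.sdiff_singleton_eq_erase, degreeSum_erase hv,
      Finset.card_erase_add_one hv]

lemma IsContractible.insert (hU : IsContractible A W (2 * C + 2) U)
    (hv : v ∈ outerNeighbors A W U) (hdeg : degreeIn A (outerNeighbors A W U) v ≤ C) :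
    IsContractible A W (2 * C + 2) (insert v U) := by
  have h_card := card_outerNeighbors_insert hv
  obtain ⟨hvW, u, hu, huv⟩ := Finset.mem_filter.1 hv
  refine ⟨Finset.insert_subset (Finset.mem_sdiff.1 hvW).1 hU.subset, ?_, ?_⟩
  · rw [Finset.coe_insert, Set.insert_eq, Set.union_comm]
    exact connected_induce_union hU.connected.preconnected .of_subsingleton hu rfl huv
  · have h_dense := hU.dense
    have h_erase := degreeSum_erase (A := A) hvW
    rw [Finset.sdiff_insert, Finset.card_erase_add_one hvW]
    rw [mul_add_one] at h_dense
    omega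

lemma IsContractible.sdiff_dense (hU : IsContractible A W K U) (hK : 0 < K)
    (hN : outerNeighbors A W U = ∅) : (W \ U).Nonempty ∧ K * #(W \ U) ≤ degreeSum A (W \ U) := by
  have h_dense := hU.dense
  rw [hN, Finset.card_empty, mul_zero, add_zero, mul_add_one] at h_dense
  refine ⟨?_, by omega⟩
  by_contra h_empty
  rw [Finset.not_nonempty_iff_eq_empty.1 h_empty] at h_dense
  simp only [Finset.card_empty, degreeSum, Finset.sum_empty] at h_dense
  omega

lemma exists_connected_with_dense_outerNeighbors (hW : W.Nonempty)
    (hdense : (2 * C + 2) * #W ≤ degreeSum A W) :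
    ∃ W' ⊆ W, ∃ U ⊆ W', (A.induce (U : Set V)).Connected ∧ (outerNeighbors A W' U).Nonempty ∧
      C * #(outerNeighbors A W' U) ≤ degreeSum A (outerNeighbors A W' U) := by
  obtain ⟨W', hW'W, ⟨⟨w, hw⟩, hW'⟩, hmin⟩ := exists_minimal_le_of_wellFoundedLT
    (fun W' : Finset V => W'.Nonempty ∧ (2 * C + 2) * #W' ≤ degreeSum A W') W ⟨hW, hdense⟩
  obtain ⟨U, -, hU, hmax⟩ := Finset.exists_le_maximal
    (W'.powerset.filter (IsContractible A W' (2 * C + 2))) (a := {w}) (by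
      have h_single := isContractible_singleton hw hW'
      exact Finset.mem_filter.2 ⟨Finset.mem_powerset.2 h_single.subset, h_single⟩)
  have hU := (Finset.mem_filter.1 hU).2
  refine ⟨W', hW'W, U, hU.subset, hU.connected, ?_, mul_card_le_degreeSum fun v hv => ?_⟩
  · by_contra hN
    have h_le := hmin (hU.sdiff_dense (by omega) (Finset.not_nonempty_iff_eq_empty.1 hN))
      Finset.sdiff_subset
    obtain ⟨⟨u, hu⟩⟩ := hU.connected.nonempty
    exact (Finset.mem_sdiff.1 (h_le (hU.subset hu))).2 hu
  · by_contra! hlt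
    have h_insert := hU.insert hv hlt.le
    have h_le := hmax (Finset.mem_filter.2 ⟨Finset.mem_powerset.2 h_insert.subset, h_insert⟩)
      (Finset.subset_insert v U)
    exact (Finset.mem_sdiff.1 (Finset.mem_filter.1 hv).1).2 (h_le (Finset.mem_insert_self v U))

end Contraction

section Mader

/-- Every graph on a vertex set of type `Type v` with average degree at least `C` on a finite set of
vertices contains a subdivision of `F` in that set. -/
def ForcesSubdivision.{u, v} {α : Type u} (F : SimpleGraph α) (C : ℕ) : Prop :=
  ∀ (V : Type v) (A : SimpleGraph V) (W : Finset V), W.Nonempty → C * #W ≤ degreeSum A W →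
    ∃ M : SubdivisionModel F A, M.toSubgraph.verts ⊆ W

variable {A : SimpleGraph V} {x y : α}

lemma exists_isPath_through {U : Set V} (hU : (A.induce U).Connected) {a b u v : V} (hu : u ∈ U)
    (hv : v ∈ U) (hau : A.Adj a u) (hvb : A.Adj v b) :
    ∃ p : A.Walk a b, p.IsPath ∧ ∀ w ∈ p.support, w = a ∨ w = b ∨ w ∈ U := by
  obtain ⟨q⟩ := hU.preconnected ⟨u, hu⟩ ⟨v, hv⟩
  let q' : A.Walk u v := q.map (Embedding.induce U).toHom
  have hq' : ∀ w ∈ q'.support, w ∈ U := fun w hw => by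
    obtain ⟨z, -, rfl⟩ := List.mem_map.1 ((Walk.support_map _ q) ▸ hw)
    exact z.2
  refine ⟨(Walk.cons hau (q'.concat hvb)).bypass, Walk.bypass_isPath _, fun w hw => ?_⟩
  have hw := Walk.support_bypass_subset_support _ hw
  simp only [Walk.support_cons, Walk.support_concat, List.mem_cons, List.mem_append,
    List.not_mem_nil, or_false] at hw
  rcases hw with rfl | hw | rfl
  exacts [Or.inl rfl, Or.inr (Or.inr (hq' w hw)), Or.inr (Or.inl rfl)]

namespace SubdivisionModel

/-- Models of an edgeless graph are injections of its vertices. -/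
def ofEdgeless (hF : F.edgeSet = ∅) (f : α → V) (hf : Function.Injective f) :
    SubdivisionModel F A where
  branch := f
  branch_injective := hf
  path _ := ⊥
  exists_isPath u v h := absurd h (Set.eq_empty_iff_forall_notMem.1 hF s(u, v))
  mem_of_branch_mem e he := absurd he (Set.eq_empty_iff_forall_notMem.1 hF e)
  inter_subset_range e he := absurd he (Set.eq_empty_iff_forall_notMem.1 hF e)

/-- Extension of a model of `F` minus an edge by a path joining the ends of that edge. -/
noncomputable def addPath (M : SubdivisionModel (F.deleteEdges {s(x, y)}) A)
    (p : A.Walk (M.branch x) (M.branch y)) (hp : p.IsPath)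
    (h : ∀ w ∈ p.support, w ∈ M.toSubgraph.verts → w = M.branch x ∨ w = M.branch y) :
    SubdivisionModel F A where
  branch := M.branch
  branch_injective := M.branch_injective
  path := Function.update M.path s(x, y) p.toSubgraph
  exists_isPath u v huv := by
    by_cases he : s(u, v) = s(x, y)
    · rw [he, Function.update_self]
      rcases Sym2.eq_iff.1 he with ⟨rfl, rfl⟩ | ⟨rfl, rfl⟩
      exacts [⟨p, hp, rfl⟩, ⟨p.reverse, hp.reverse, p.toSubgraph_reverse⟩]
    · rw [Function.update_of_ne he]
      exact M.exists_isPath u v (deleteEdges_adj.2 ⟨huv, he⟩)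
  mem_of_branch_mem e he a ha := by
    by_cases hxy : e = s(x, y)
    · rw [hxy, Function.update_self, Walk.mem_verts_toSubgraph] at ha
      rw [hxy, Sym2.mem_iff]
      exact (h _ ha (M.branch_mem_verts a)).imp (M.branch_injective ·) (M.branch_injective ·)
    · rw [Function.update_of_ne hxy] at ha
      exact M.mem_of_branch_mem e (edgeSet_deleteEdges _ ▸ ⟨he, hxy⟩) a ha
  inter_subset_range := by
    have inter_new : ∀ e ∈ F.edgeSet, e ≠ s(x, y) →
        p.toSubgraph.verts ∩ (M.path e).verts ⊆ Set.range M.branch := by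
      rintro e he hxy w ⟨hwp, hwe⟩
      have hw := (M.path_le_toSubgraph (edgeSet_deleteEdges _ ▸ ⟨he, hxy⟩)).1 hwe
      rcases h w (p.mem_verts_toSubgraph.1 hwp) hw with rfl | rfl
      exacts [⟨x, rfl⟩, ⟨y, rfl⟩]
    intro e he e' he' hne
    rcases eq_or_ne e s(x, y) with rfl | hxy
    · rw [Function.update_self, Function.update_of_ne hne.symm]
      exact inter_new e' he' hne.symm
    rcases eq_or_ne e' s(x, y) with rfl | hxy'
    · rw [Function.update_self, Function.update_of_ne hxy, Set.inter_comm]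
      exact inter_new e he hxy
    rw [Function.update_of_ne hxy, Function.update_of_ne hxy']
    exact M.inter_subset_range e (edgeSet_deleteEdges _ ▸ ⟨he, hxy⟩) e'
      (edgeSet_deleteEdges _ ▸ ⟨he', hxy'⟩) hne

lemma verts_addPath_subset (M : SubdivisionModel (F.deleteEdges {s(x, y)}) A)
    (p : A.Walk (M.branch x) (M.branch y)) (hp : p.IsPath)
    (h : ∀ w ∈ p.support, w ∈ M.toSubgraph.verts → w = M.branch x ∨ w = M.branch y) :
    (M.addPath p hp h).toSubgraph.verts ⊆ M.toSubgraph.verts ∪ {w | w ∈ p.support} := by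
  rw [verts_toSubgraph]
  rintro w (⟨a, rfl⟩ | hw)
  · exact Or.inl (M.branch_mem_verts a)
  obtain ⟨e, he, hw⟩ := Set.mem_iUnion₂.1 hw
  by_cases hxy : e = s(x, y)
  · simp only [addPath, hxy, Function.update_self] at hw
    exact Or.inr (p.mem_verts_toSubgraph.1 hw)
  · simp only [addPath, Function.update_of_ne hxy] at hw
    exact Or.inl ((M.path_le_toSubgraph (edgeSet_deleteEdges _ ▸ ⟨he, hxy⟩)).1 hw)

end SubdivisionModel

lemma ForcesSubdivision.of_edgeless.{u, v} {α : Type u} [Finite α] {F : SimpleGraph α}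
    (hF : F.edgeSet = ∅) : ForcesSubdivision.{u, v} F (Nat.card α) := by
  intro V A W hW hdense
  let _ := Fintype.ofFinite α
  have h_card : Fintype.card α ≤ Fintype.card W := by
    rw [← Nat.card_eq_fintype_card, Fintype.card_coe]
    exact Nat.le_of_mul_le_mul_right (hdense.trans degreeSum_le_card_mul_card) hW.card_pos
  obtain ⟨g⟩ := Function.Embedding.nonempty_of_card_le h_card
  refine ⟨.ofEdgeless hF (fun a => g a) fun a b h => g.injective (Subtype.ext h), ?_⟩
  rw [SubdivisionModel.verts_toSubgraph, hF]
  simpa [SubdivisionModel.ofEdgeless] using Set.range_subset_iff.2 fun a => (g a).2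

lemma ForcesSubdivision.of_deleteEdge.{u, v} {α : Type u} {F : SimpleGraph α} {x y : α} {C : ℕ}
    (hC : ForcesSubdivision.{u, v} (F.deleteEdges {s(x, y)}) C) :
    ForcesSubdivision.{u, v} F (2 * C + 2) := by
  intro V A W hW hdense
  obtain ⟨W', hW'W, U, hUW', hU, hN, hN_dense⟩ :=
    exists_connected_with_dense_outerNeighbors hW hdense
  obtain ⟨M, hM⟩ := hC V A _ hN hN_dense
  have outer_of_mem : ∀ {w}, w ∈ M.toSubgraph.verts → w ∈ W' \ U ∧ ∃ u ∈ U, A.Adj u w :=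
    fun hw => Finset.mem_filter.1 (hM hw)
  obtain ⟨-, u, hu, hux⟩ := outer_of_mem (M.branch_mem_verts x)
  obtain ⟨-, v, hv, hvy⟩ := outer_of_mem (M.branch_mem_verts y)
  obtain ⟨p, hp, hpU⟩ := exists_isPath_through hU hu hv hux.symm hvy
  refine ⟨M.addPath p hp fun w hw hwM => ?_, (M.verts_addPath_subset p hp _).trans ?_⟩
  · rcases hpU w hw with h | h | h
    exacts [Or.inl h, Or.inr h, absurd h (Finset.mem_sdiff.1 (outer_of_mem hwM).1).2]
  · have mem_W : ∀ {w}, w ∈ M.toSubgraph.verts → w ∈ W := fun hw =>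
      hW'W (Finset.mem_sdiff.1 (outer_of_mem hw).1).1
    rintro w (hw | hw)
    · exact mem_W hw
    · rcases hpU w hw with rfl | rfl | h
      exacts [mem_W (M.branch_mem_verts x), mem_W (M.branch_mem_verts y), hW'W (hUW' h)]

/-- Mader's theorem. -/
theorem exists_forcesSubdivision.{u, v} {α : Type u} [Finite α] (F : SimpleGraph α) :
    ∃ C, ForcesSubdivision.{u, v} F C := by
  induction hk : F.edgeSet.ncard generalizing F with
  | zero => exact ⟨_, .of_edgeless ((Set.ncard_eq_zero (Set.toFinite _)).1 hk)⟩
  | succ k ih =>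
    obtain ⟨e, he⟩ := Set.nonempty_of_ncard_ne_zero (s := F.edgeSet) (by omega)
    induction e using Sym2.ind with
    | _ x y =>
      obtain ⟨C, hC⟩ := ih (F.deleteEdges {s(x, y)}) (by
        rw [edgeSet_deleteEdges, Set.ncard_sdiff_singleton_of_mem he, hk, Nat.add_sub_cancel])
      exact ⟨_, hC.of_deleteEdge⟩

end Mader

section Links

lemma exists_maximal_partial_transversal {ι σ : Type*} [Nonempty σ] (T : Finset ι)
    (t : ι → Set σ) :
    ∃ J ⊆ T, ∃ c : ι → σ, Set.InjOn c J ∧ (∀ i ∈ J, c i ∈ t i) ∧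
      ∀ i ∈ T, i ∉ J → t i ⊆ c '' J := by
  induction T using Finset.induction_on with
  | empty => exact ⟨∅, subset_rfl, fun _ => Classical.arbitrary σ, by simp⟩
  | insert i T hi ih =>
    obtain ⟨J, hJT, c, c_inj, hc, hmax⟩ := ih
    by_cases ht : t i ⊆ c '' J
    · refine ⟨J, hJT.trans (Finset.subset_insert i T), c, c_inj, hc, fun j hj hjJ => ?_⟩
      rcases Finset.mem_insert.1 hj with rfl | hj
      exacts [ht, hmax j hj hjJ]
    obtain ⟨s, hs, hsJ⟩ := Set.not_subset.1 ht
    have hiJ : i ∉ J := fun h => hi (hJT h)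
    have update_eqOn : Set.EqOn (Function.update c i s) c J := fun j hj =>
      Function.update_of_ne (ne_of_mem_of_not_mem (Finset.mem_coe.1 hj) hiJ) _ _
    refine ⟨insert i J, Finset.insert_subset_insert i hJT, Function.update c i s, ?_,
      fun j hj => ?_, fun j hj hjJ => ?_⟩
    · rw [Finset.coe_insert, Set.injOn_insert (by simpa using hiJ), update_eqOn.image_eq,
        Function.update_self]
      exact ⟨c_inj.congr update_eqOn.symm, hsJ⟩
    · rcases Finset.mem_insert.1 hj with rfl | hj
      · rwa [Function.update_self]
      · exact update_eqOn hj ▸ hc j hj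
    · rw [Finset.mem_insert, not_or] at hjJ
      rw [Finset.coe_insert, Set.image_insert_eq, update_eqOn.image_eq]
      exact (hmax j (Finset.mem_of_mem_insert_of_ne hj hjJ.1) hjJ.2).trans (Set.subset_insert _ _)

lemma two_mul_card_le_degreeSum {A : SimpleGraph V} {W : Finset V} {E : Finset (Sym2 V)}
    (hE : ∀ s ∈ E, s ∈ A.edgeSet ∧ ∀ v ∈ s, v ∈ W) : 2 * #E ≤ degreeSum A W := by
  have card_ends : ∀ s ∈ E, #{v ∈ W | v ∈ s} = 2 := fun s hs => by
    obtain ⟨hsA, hsW⟩ := hE s hs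
    rw [← Sym2.card_toFinset_of_not_isDiag s (A.not_isDiag_of_mem_edgeSet hsA)]
    congr 1
    ext v
    simpa using hsW v
  have card_incident : ∀ v ∈ W, #{s ∈ E | v ∈ s} ≤ degreeIn A W v := fun v _ => by
    refine (Finset.card_le_card fun s hs => ?_).trans
      (Finset.card_image_le (f := fun w => s(v, w)) (s := {w ∈ W | A.Adj v w}))
    obtain ⟨hs, w, rfl⟩ := Finset.mem_filter.1 hs
    obtain ⟨hvw, hW⟩ := hE _ hs
    exact Finset.mem_image_of_mem _
      (Finset.mem_filter.2 ⟨hW w (Sym2.mem_mk_right v w), hvw⟩)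
  calc 2 * #E = ∑ s ∈ E, #{v ∈ W | v ∈ s} := by
        rw [Finset.sum_congr rfl card_ends, Finset.sum_const, smul_eq_mul, mul_comm]
    _ = ∑ v ∈ W, #{s ∈ E | v ∈ s} :=
        (Finset.sum_card_bipartiteAbove_eq_sum_card_bipartiteBelow (fun v s => v ∈ s)).symm
    _ ≤ degreeSum A W := Finset.sum_le_sum card_incident

lemma le_degreeIn_union_of_complete {A : SimpleGraph V} {X Y : Finset V} {C : ℕ}
    (hXY : ∀ x ∈ X, ∀ y ∈ Y, x ≠ y → A.Adj x y) (hX : C + 1 ≤ #X) (hY : C + 1 ≤ #Y) :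
    ∀ v ∈ X ∪ Y, C ≤ degreeIn A (X ∪ Y) v := by
  have le_of_adj : ∀ (Z : Finset V) v, Z ⊆ X ∪ Y → C + 1 ≤ #Z → (∀ z ∈ Z, z ≠ v → A.Adj v z) →
      C ≤ degreeIn A (X ∪ Y) v := fun Z v hZ hC hadj => by
    have h_sub : Z.erase v ⊆ {z ∈ X ∪ Y | A.Adj v z} := fun z hz =>
      Finset.mem_filter.2 ⟨hZ (Finset.mem_of_mem_erase hz),
        hadj z (Finset.mem_of_mem_erase hz) (Finset.ne_of_mem_erase hz)⟩
    exact (Nat.le_sub_one_of_lt hC).trans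
      (Finset.pred_card_le_card_erase.trans (Finset.card_le_card h_sub))
  intro v hv
  rcases Finset.mem_union.1 hv with hv | hv
  · exact le_of_adj Y v Finset.subset_union_right hY fun z hz hzv => hXY v hv z hz hzv.symm
  · exact le_of_adj X v Finset.subset_union_left hX fun z hz hzv => (hXY z hz v hv hzv).symm

/-- The segments `seg i`, for `i ∈ T`, are disjoint sets of vertices off the image of `g`, and each
of them becomes a path of `G` after adding any member of `first i` and any other member of `last i`
as its two ends. -/
structure IsLinkFamily {ι : Type*} (G : SimpleGraph V) (g : β → V) (T : Finset ι)
    (seg : ι → Set V) (first last : ι → Finset β) : Prop where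
  injective : Function.Injective g
  disjoint_range : ∀ i ∈ T, Disjoint (seg i) (Set.range g)
  pairwiseDisjoint : (T : Set ι).PairwiseDisjoint seg
  exists_isPath : ∀ i ∈ T, ∀ x ∈ first i, ∀ y ∈ last i, x ≠ y →
    ∃ p : G.Walk (g x) (g y), p.IsPath ∧ p.toSubgraph.verts = {g x, g y} ∪ seg i

lemma exists_path_subgraphs {g : β → V} {S : Sym2 β → Set V}
    (hpath : ∀ x y, B.Adj x y →
      ∃ p : G.Walk (g x) (g y), p.IsPath ∧ p.toSubgraph.verts = {g x, g y} ∪ S s(x, y)) :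
    ∃ P : Sym2 β → G.Subgraph, (∀ s ∈ B.edgeSet, (P s).verts = g '' {x | x ∈ s} ∪ S s) ∧
      ∀ x y, B.Adj x y → ∃ p : G.Walk (g x) (g y), p.IsPath ∧ p.toSubgraph = P s(x, y) := by
  have exists_subgraph : ∀ s : Sym2 β, ∃ P : G.Subgraph, s ∈ B.edgeSet →
      P.verts = g '' {x | x ∈ s} ∪ S s ∧
        ∀ x y, s = s(x, y) → ∃ p : G.Walk (g x) (g y), p.IsPath ∧ p.toSubgraph = P := by
    intro s
    induction s using Sym2.ind with
    | _ a b =>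
      by_cases hab : B.Adj a b
      · obtain ⟨p, hp, hp_verts⟩ := hpath a b hab
        refine ⟨p.toSubgraph, fun _ => ⟨?_, fun x y hs => ?_⟩⟩
        · rw [hp_verts, ← Set.image_pair]
          congr 2
          ext z
          simp
        · rcases Sym2.eq_iff.1 hs with ⟨rfl, rfl⟩ | ⟨rfl, rfl⟩
          · exact ⟨p, hp, rfl⟩
          · exact ⟨p.reverse, hp.reverse, p.toSubgraph_reverse⟩
      · exact ⟨⊥, fun h => absurd h hab⟩
  choose P hP using exists_subgraph
  exact ⟨P, fun s hs => (hP s hs).1, fun x y hxy => (hP _ hxy).2 x y rfl⟩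

lemma SubdivisionModel.exists_of_segments {g : β → V} (hg : Function.Injective g)
    {S : Sym2 β → Set V} (hS : ∀ s ∈ B.edgeSet, Disjoint (S s) (Set.range g))
    (hSS : B.edgeSet.PairwiseDisjoint S)
    (hpath : ∀ x y, B.Adj x y →
      ∃ p : G.Walk (g x) (g y), p.IsPath ∧ p.toSubgraph.verts = {g x, g y} ∪ S s(x, y)) :
    ∃ N : SubdivisionModel B G, N.branch = g ∧
      ∀ s ∈ B.edgeSet, (N.path s).verts = g '' {x | x ∈ s} ∪ S s := by
  obtain ⟨P, verts_P, hP⟩ := exists_path_subgraphs hpath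
  have verts_P_subset : ∀ s ∈ B.edgeSet, (P s).verts ⊆ Set.range g ∪ S s := fun s hs =>
    verts_P s hs ▸ Set.union_subset_union_left _ (Set.image_subset_range _ _)
  refine ⟨⟨g, hg, P, fun u v h => ?_, fun s hs a ha => ?_, fun s hs s' hs' hne w hw => ?_⟩, rfl,
    verts_P⟩
  · exact hP u v h
  · rw [verts_P s hs] at ha
    rcases ha with ⟨x, hx, hxa⟩ | ha
    exacts [hg hxa ▸ hx, absurd ⟨a, rfl⟩ (Set.disjoint_left.1 (hS s hs) ha)]
  · rcases verts_P_subset s hs hw.1, verts_P_subset s' hs' hw.2 with ⟨h | h, h' | h'⟩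
    exacts [h, h, h', absurd h' (Set.disjoint_left.1 (hSS hs hs' hne) h)]

lemma SubdivisionModel.exists_mem_edge (M : SubdivisionModel F G)
    (hF : ∀ a, ∃ b, F.Adj a b) {w : V} (hw : w ∈ M.toSubgraph.verts) :
    ∃ s ∈ M.toSubgraph.edgeSet, w ∈ s := by
  obtain ⟨e, he, hwe⟩ : ∃ e ∈ F.edgeSet, w ∈ (M.path e).verts := by
    rw [verts_toSubgraph] at hw
    rcases hw with ⟨a, rfl⟩ | hw
    · obtain ⟨b, hab⟩ := hF a
      exact ⟨s(a, b), hab, M.branch_mem_path hab (Sym2.mem_mk_left a b)⟩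
    · simpa using hw
  induction e using Sym2.ind with
  | _ u v =>
    obtain ⟨p, -, hp⟩ := M.exists_isPath u v he
    have not_nil : ¬ p.Nil := fun h => F.ne_of_adj he (M.branch_injective h.eq)
    rw [← hp, Walk.mem_verts_toSubgraph,
      Walk.mem_support_iff_exists_mem_edges_of_not_nil not_nil] at hwe
    obtain ⟨s, hs, hws⟩ := hwe
    rw [← Walk.mem_edges_toSubgraph, hp] at hs
    exact ⟨s, Subgraph.edgeSet_mono (M.path_le_toSubgraph he) hs, hws⟩

lemma exists_dense_representatives {ι : Type*} [Fintype β] {T : Finset ι} (hT : T.Nonempty)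
    {first last : ι → Finset β} {C : ℕ} (h_first : ∀ i ∈ T, C + 1 ≤ #(first i))
    (h_last : ∀ i ∈ T, C + 1 ≤ #(last i)) (hC : C * Fintype.card β ≤ 2 * #T) :
    ∃ J ⊆ T, ∃ c : ι → Sym2 β, Set.InjOn c J ∧
      (∀ i ∈ J, ∃ x ∈ first i, ∃ y ∈ last i, x ≠ y ∧ s(x, y) = c i) ∧
      ∃ W : Finset β, W.Nonempty ∧ C * #W ≤ degreeSum (fromEdgeSet (c '' J)) W := by
  obtain ⟨i₀, hi₀⟩ := hT
  obtain ⟨x₀, -⟩ : (first i₀).Nonempty := Finset.card_pos.1 (by have := h_first i₀ hi₀; omega)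
  have : Nonempty (Sym2 β) := ⟨s(x₀, x₀)⟩
  obtain ⟨J, hJT, c, c_inj, hc, hmax⟩ := exists_maximal_partial_transversal T
    fun i => {s | ∃ x ∈ first i, ∃ y ∈ last i, x ≠ y ∧ s(x, y) = s}
  refine ⟨J, hJT, c, c_inj, hc, ?_⟩
  by_cases hJ : T ⊆ J
  · have hE : ∀ s ∈ J.image c,
        s ∈ (fromEdgeSet (c '' (J : Set ι))).edgeSet ∧ ∀ v ∈ s, v ∈ Finset.univ := fun s hs => by
      obtain ⟨i, hi, rfl⟩ := Finset.mem_image.1 hs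
      obtain ⟨x, -, y, -, hxy, h⟩ := hc i hi
      refine ⟨?_, fun _ _ => Finset.mem_univ _⟩
      rw [← h, mem_edgeSet, fromEdgeSet_adj, h]
      exact ⟨Set.mem_image_of_mem c hi, hxy⟩
    refine ⟨Finset.univ, ⟨x₀, Finset.mem_univ _⟩, ?_⟩
    calc C * #(Finset.univ : Finset β) ≤ 2 * #T := hC
      _ ≤ 2 * #(J.image c) := by
        rw [Finset.card_image_of_injOn c_inj]
        exact Nat.mul_le_mul_left 2 (Finset.card_le_card hJ)
      _ ≤ _ := two_mul_card_le_degreeSum hE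
  · obtain ⟨i, hiT, hiJ⟩ := Finset.not_subset.1 hJ
    have complete : ∀ x ∈ first i, ∀ y ∈ last i, x ≠ y →
        (fromEdgeSet (c '' (J : Set ι))).Adj x y := fun x hx y hy hxy =>
      (fromEdgeSet_adj _).2 ⟨hmax i hiT hiJ ⟨x, hx, y, hy, hxy, rfl⟩, hxy⟩
    have : (first i).Nonempty := Finset.card_pos.1 (by have := h_first i hiT; omega)
    exact ⟨first i ∪ last i, this.inl, mul_card_le_degreeSum
      (le_degreeIn_union_of_complete complete (h_first i hiT) (h_last i hiT))⟩

lemma IsLinkFamily.exists_model {ι : Type*} {g : β → V} {T J : Finset ι} {seg : ι → Set V}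
    {first last : ι → Finset β} (hlink : IsLinkFamily G g T seg first last) (hJT : J ⊆ T)
    {c : ι → Sym2 β} (c_inj : Set.InjOn c J)
    (hc : ∀ i ∈ J, ∃ x ∈ first i, ∃ y ∈ last i, x ≠ y ∧ s(x, y) = c i) :
    ∃ N : SubdivisionModel (fromEdgeSet (c '' J)) G, N.branch = g ∧
      ∀ i ∈ J, (N.path (c i)).verts = g '' {x | x ∈ c i} ∪ seg i := by
  have seg_eq : ∀ i ∈ J, ⋃ j ∈ {j ∈ J | c j = c i}, seg j = seg i := fun i hi => by
    have : {j ∈ J | c j = c i} = {i} := by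
      ext j
      rw [Finset.mem_filter, Finset.mem_singleton]
      exact ⟨fun h => c_inj h.1 hi h.2, by rintro rfl; exact ⟨hi, rfl⟩⟩
    rw [this, Finset.set_biUnion_singleton]
  have exists_index : ∀ s ∈ (fromEdgeSet (c '' (J : Set ι))).edgeSet, ∃ i ∈ J, c i = s :=
    fun s hs => by
      rw [edgeSet_fromEdgeSet] at hs
      exact hs.1
  have disjoint_range : ∀ s ∈ (fromEdgeSet (c '' (J : Set ι))).edgeSet,
      Disjoint (⋃ j ∈ {j ∈ J | c j = s}, seg j) (Set.range g) := fun s hs => by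
    obtain ⟨i, hi, rfl⟩ := exists_index s hs
    exact seg_eq i hi ▸ hlink.disjoint_range i (hJT hi)
  have pairwiseDisjoint : (fromEdgeSet (c '' (J : Set ι))).edgeSet.PairwiseDisjoint
      fun s => ⋃ j ∈ {j ∈ J | c j = s}, seg j := fun s hs s' hs' hne => by
    obtain ⟨i, hi, rfl⟩ := exists_index s hs
    obtain ⟨i', hi', rfl⟩ := exists_index s' hs'
    rw [Function.onFun, seg_eq i hi, seg_eq i' hi']
    exact hlink.pairwiseDisjoint (hJT hi) (hJT hi') fun h => hne (congrArg c h)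
  obtain ⟨N, hN, hN_verts⟩ := SubdivisionModel.exists_of_segments hlink.injective disjoint_range
    pairwiseDisjoint fun x y hxy => by
      obtain ⟨i, hi, hixy⟩ := exists_index s(x, y) hxy
      obtain ⟨a, ha, b, hb, hab, h⟩ := hc i hi
      obtain ⟨p, hp, hp_verts⟩ := hlink.exists_isPath i (hJT hi) a ha b hb hab
      rw [← hixy, seg_eq i hi]
      rcases Sym2.eq_iff.1 (h.trans hixy) with ⟨rfl, rfl⟩ | ⟨rfl, rfl⟩
      · exact ⟨p, hp, hp_verts⟩
      · exact ⟨p.reverse, hp.reverse, by rw [Walk.toSubgraph_reverse, hp_verts, Set.pair_comm]⟩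
  refine ⟨N, hN, fun i hi => ?_⟩
  obtain ⟨x, -, y, -, hxy, h⟩ := hc i hi
  have hi_edge : c i ∈ (fromEdgeSet (c '' (J : Set ι))).edgeSet := by
    rw [← h, mem_edgeSet, fromEdgeSet_adj, h]
    exact ⟨Set.mem_image_of_mem c hi, hxy⟩
  rw [hN_verts _ hi_edge, seg_eq i hi]

lemma SubdivisionModel.exists_verts_substitute {ι : Type*} {J : Finset ι} {c : ι → Sym2 β}
    {seg : ι → Set V} (N : SubdivisionModel B G) (hB : B.edgeSet ⊆ c '' J)
    (hN : ∀ i ∈ J, (N.path (c i)).verts = N.branch '' {x | x ∈ c i} ∪ seg i) {S : B.Subgraph}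
    (hS : S.verts.Nonempty) (S_no_isolated : ∀ x ∈ S.verts, ∃ s ∈ S.edgeSet, x ∈ s) :
    ∃ X : Finset β, ∃ J' ⊆ J, J'.Nonempty ∧ #X ≤ 2 * #J' ∧
      (N.substitute S).verts = N.branch '' X ∪ ⋃ i ∈ J', seg i := by
  set J' : Finset ι := {i ∈ J | c i ∈ S.edgeSet}
  set X : Finset β := J'.biUnion fun i => (c i).toFinset
  have mem_J' : ∀ {i}, i ∈ J' ↔ i ∈ J ∧ c i ∈ S.edgeSet := Finset.mem_filter
  have exists_mem_J' : ∀ s ∈ S.edgeSet, ∃ i ∈ J', c i = s := fun s hs => by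
    obtain ⟨i, hi, rfl⟩ := hB (S.edgeSet_subset hs)
    exact ⟨i, mem_J'.2 ⟨hi, hs⟩, rfl⟩
  have mem_X : ∀ x, x ∈ X ↔ ∃ i ∈ J', x ∈ c i := by simp [X]
  have coe_X : (X : Set β) = S.verts := Set.ext fun x => by
    rw [Finset.mem_coe, mem_X]
    refine ⟨fun ⟨i, hi, hx⟩ => S.mem_verts_of_mem_edge (mem_J'.1 hi).2 hx, fun hx => ?_⟩
    obtain ⟨s, hs, hxs⟩ := S_no_isolated x hx
    obtain ⟨i, hi, rfl⟩ := exists_mem_J' s hs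
    exact ⟨i, hi, hxs⟩
  have card_X : #X ≤ #J' * 2 := Finset.card_biUnion_le_card_mul J' _ 2 fun i hi =>
    (Sym2.card_toFinset_of_not_isDiag (c i) (B.not_isDiag_of_mem_edgeSet
      (S.edgeSet_subset (mem_J'.1 hi).2))).le
  refine ⟨X, J', Finset.filter_subset _ _, ?_, by omega, ?_⟩
  · obtain ⟨x, hx⟩ := hS
    obtain ⟨i, hi, -⟩ := (mem_X x).1 (Finset.mem_coe.1 (coe_X ▸ hx))
    exact ⟨i, hi⟩
  · rw [coe_X]
    refine Set.Subset.antisymm (Set.union_subset Set.subset_union_left ?_)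
      (Set.union_subset Set.subset_union_left ?_)
    · refine Set.iUnion₂_subset fun s hs => ?_
      obtain ⟨i, hi, rfl⟩ := exists_mem_J' s hs
      rw [hN i (mem_J'.1 hi).1]
      exact Set.union_subset_union
        (Set.image_mono fun x hx => S.mem_verts_of_mem_edge hs hx)
        (Set.subset_biUnion_of_mem (u := seg) (Finset.mem_coe.2 hi))
    · refine Set.iUnion₂_subset fun i hi => Set.subset_union_of_subset_right ?_ _
      have hi := mem_J'.1 hi
      exact (hN i hi.1 ▸ Set.subset_union_right).trans
        (Set.subset_biUnion_of_mem (u := fun e => (N.path e).verts) hi.2)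

theorem ForcesSubdivision.exists_of_isLinkFamily.{u, v, w} {ι : Type*} {α : Type u} {β : Type v}
    {V : Type w} [Fintype β] [Nonempty α] {F : SimpleGraph α} {G : SimpleGraph V} {C : ℕ}
    (hFC : ForcesSubdivision.{u, v} F C) (hF : ∀ a, ∃ b, F.Adj a b) {g : β → V} {T : Finset ι}
    {seg : ι → Set V} {first last : ι → Finset β} (hlink : IsLinkFamily G g T seg first last)
    (hT : T.Nonempty) (h_first : ∀ i ∈ T, C + 1 ≤ #(first i))
    (h_last : ∀ i ∈ T, C + 1 ≤ #(last i)) (hC : C * Fintype.card β ≤ 2 * #T) :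
    ∃ X : Finset β, ∃ J ⊆ T, J.Nonempty ∧ #X ≤ 2 * #J ∧
      ∃ H : G.Subgraph, H.verts = g '' X ∪ ⋃ i ∈ J, seg i ∧ F.IsSubdivision H.coe := by
  obtain ⟨J, hJT, c, c_inj, hc, W, hW, dense⟩ := exists_dense_representatives hT h_first h_last hC
  obtain ⟨M, -⟩ := hFC β (fromEdgeSet (c '' J)) W hW dense
  obtain ⟨N, rfl, hN⟩ := hlink.exists_model hJT c_inj hc
  obtain ⟨X, J', hJ', hJ'_ne, hX, hverts⟩ := N.exists_verts_substitute
    (by rw [edgeSet_fromEdgeSet]; exact Set.sdiff_subset) hN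
    ⟨_, M.branch_mem_verts (Classical.arbitrary α)⟩ fun x hx => M.exists_mem_edge hF hx
  refine ⟨X, J', hJ'.trans hJT, hJ'_ne, hX, (N.comp M).toSubgraph, ?_, (N.comp M).isSubdivision⟩
  rw [SubdivisionModel.toSubgraph_comp, hverts]

end Links

section Coloring

variable {κ : Type*} [Fintype V]

/-- The set of vertices of colour `j` under `χ`. -/
noncomputable def colorClass (χ : V → κ) (j : κ) : Finset V := {v | χ v = j}

lemma mem_colorClass {χ : V → κ} {j : κ} {v : V} : v ∈ colorClass χ j ↔ χ v = j := by
  simp [colorClass]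

variable [Fintype κ]

lemma sum_colorings_mul_eq_zero {u w : V} (huw : u ≠ w) {g : κ → ℝ} (hg : ∑ c, g c = 0)
    (h : κ → ℝ) : ∑ χ : V → κ, g (χ u) * h (χ w) = 0 := by
  have split_apply : ∀ (c : κ) (χ : {v // v ≠ u} → κ),
      g ((Equiv.funSplitAt u κ).symm (c, χ) u) * h ((Equiv.funSplitAt u κ).symm (c, χ) w) =
        g c * h (χ ⟨w, huw.symm⟩) := fun c χ => by
    simp [Equiv.funSplitAt, Equiv.piSplitAt, huw.symm]
  rw [← (Equiv.funSplitAt u κ).symm.sum_comp (fun χ => g (χ u) * h (χ w)),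
    Fintype.sum_prod_type_right]
  simp only [split_apply, ← Finset.sum_mul, hg, zero_mul, Finset.sum_const_zero]

/- The colours of distinct vertices are independent, so centred functions of them are orthogonal. -/
lemma sum_colorings_sum_sq {g : κ → ℝ} (hg : ∑ c, g c = 0) (S : Finset V) :
    ∑ χ : V → κ, (∑ u ∈ S, g (χ u)) ^ 2 = ∑ u ∈ S, ∑ χ : V → κ, g (χ u) ^ 2 := by
  simp only [sq, Finset.sum_mul_sum]
  rw [Finset.sum_comm]
  refine Finset.sum_congr rfl fun u hu => ?_
  rw [Finset.sum_comm]
  exact Finset.sum_eq_single_of_mem u hu fun w _ hwu => sum_colorings_mul_eq_zero hwu.symm hg g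

lemma sum_colorings_deviation_sq_le (S : Finset V) :
    ∑ χ : V → κ, ∑ j, ((Fintype.card κ : ℝ) * #{u ∈ S | χ u = j} - #S) ^ 2 ≤
      ∑ _χ : V → κ, (Fintype.card κ : ℝ) ^ 2 * #S := by
  set N : ℝ := (Fintype.card κ : ℝ)
  set g : κ → κ → ℝ := fun j c => N * (if c = j then 1 else 0) - 1 with hg
  have sum_g : ∀ j, ∑ c, g j c = 0 := fun j => by simp [hg, N]
  have deviation_eq : ∀ (χ : V → κ) j, N * #{u ∈ S | χ u = j} - #S = ∑ u ∈ S, g j (χ u) :=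
    fun χ j => by
      rw [Finset.sum_sub_distrib, ← Finset.mul_sum, Finset.sum_boole, Finset.sum_const, nsmul_one]
  have sum_g_sq_le : ∀ c, ∑ j, g j c ^ 2 ≤ N ^ 2 := fun c => by
    have hN : 1 ≤ N := Nat.one_le_cast.2 (Fintype.card_pos_iff.2 ⟨c⟩)
    have g_sq : ∀ j, g j c ^ 2 = (N ^ 2 - 2 * N) * (if c = j then 1 else 0) + 1 := fun j => by
      simp only [hg]
      split_ifs <;> ring
    simp only [g_sq, Finset.sum_add_distrib, ← Finset.mul_sum, Finset.sum_ite_eq,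
      Finset.mem_univ, if_true, Finset.sum_const, Finset.card_univ, nsmul_eq_mul]
    change (N ^ 2 - 2 * N) * 1 + N * 1 ≤ N ^ 2
    linarith
  calc ∑ χ : V → κ, ∑ j, (N * #{u ∈ S | χ u = j} - #S) ^ 2
      = ∑ u ∈ S, ∑ χ : V → κ, ∑ j, g j (χ u) ^ 2 := by
        simp only [deviation_eq]
        rw [Finset.sum_comm]
        simp only [sum_colorings_sum_sq (sum_g _)]
        rw [Finset.sum_comm]
        exact Finset.sum_congr rfl fun u _ => Finset.sum_comm
    _ ≤ ∑ u ∈ S, ∑ _χ : V → κ, N ^ 2 :=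
        Finset.sum_le_sum fun u _ => Finset.sum_le_sum fun χ _ => sum_g_sq_le (χ u)
    _ = ∑ _χ : V → κ, N ^ 2 * #S := by
        rw [Finset.sum_comm]
        simp [mul_comm]

lemma exists_coloring_deviation_sq_le [Nonempty κ] {ι : Type*} (I : Finset ι) (S : ι → Finset V) :
    ∃ χ : V → κ, ∑ i ∈ I, ∑ j, ((Fintype.card κ : ℝ) * #{u ∈ S i | χ u = j} - #(S i)) ^ 2 ≤
      ∑ i ∈ I, (Fintype.card κ : ℝ) ^ 2 * #(S i) := by
  have sum_le : ∑ χ : V → κ, ∑ i ∈ I, ∑ j,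
        ((Fintype.card κ : ℝ) * #{u ∈ S i | χ u = j} - #(S i)) ^ 2 ≤
      ∑ _χ : V → κ, ∑ i ∈ I, (Fintype.card κ : ℝ) ^ 2 * #(S i) := by
    rw [Finset.sum_comm, Finset.sum_comm (t := I)]
    exact Finset.sum_le_sum fun i _ => sum_colorings_deviation_sq_le (S i)
  obtain ⟨χ, -, hχ⟩ := Finset.exists_le_of_sum_le Finset.univ_nonempty sum_le
  exact ⟨χ, hχ⟩

lemma degreeIn_mono {V : Type*} {G : SimpleGraph V} {S T : Finset V} {v : V} (h : S ⊆ T) :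
    degreeIn G S v ≤ degreeIn G T v :=
  Finset.card_le_card (Finset.filter_subset_filter _ h)

lemma sum_degreeIn_comm {V : Type*} {G : SimpleGraph V} (S T : Finset V) :
    ∑ v ∈ S, degreeIn G T v = ∑ u ∈ T, degreeIn G S u := by
  simp only [degreeIn, Finset.card_filter]
  rw [Finset.sum_comm]
  simp only [G.adj_comm]

/-- Every degree of `G` is `(1 ± ε) d`, and every vertex outside the small exceptional set `B` has
`(1 ± 2ε) d / |κ|` neighbours of each colour. -/
structure IsBalancedColoring (G : SimpleGraph V) (χ : V → κ) (B : Finset V) (ε d : ℝ) : Prop where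
  le_degree : ∀ v, (1 - ε) * d ≤ degreeIn G Finset.univ v
  degree_le : ∀ v, degreeIn G Finset.univ v ≤ (1 + ε) * d
  card_exceptional_le : #B ≤ ε * Fintype.card V
  le_degree_colorClass : ∀ v ∉ B, ∀ j,
    (1 - 2 * ε) * d ≤ Fintype.card κ * degreeIn G (colorClass χ j) v
  degree_colorClass_le : ∀ v ∉ B, ∀ j,
    Fintype.card κ * degreeIn G (colorClass χ j) v ≤ (1 + 2 * ε) * d

lemma card_mul_sq_le_sum_sq {ι : Type*} [Fintype ι] {f : ι → κ → ℝ} {a : ℝ} (ha : 0 ≤ a) :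
    #{i | ∃ j, a < |f i j|} * a ^ 2 ≤ ∑ i, ∑ j, f i j ^ 2 := by
  rw [← nsmul_eq_mul]
  refine (Finset.card_nsmul_le_sum _ (fun i => ∑ j, f i j ^ 2) _ fun i hi => ?_).trans
    (Finset.sum_le_univ_sum_of_nonneg fun i => Finset.sum_nonneg fun j _ => sq_nonneg _)
  obtain ⟨j, hj⟩ := (Finset.mem_filter.1 hi).2
  calc a ^ 2 ≤ f i j ^ 2 := by rw [← sq_abs (f i j)]; gcongr
    _ ≤ ∑ j, f i j ^ 2 := Finset.single_le_sum (fun j _ => sq_nonneg (f i j)) (Finset.mem_univ j)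

theorem exists_isBalancedColoring [Nonempty κ] {ε d : ℝ} (hε : 0 < ε) (hε1 : ε ≤ 1) (hd : 0 < d)
    (hdκ : 2 * (Fintype.card κ : ℝ) ^ 2 ≤ ε ^ 3 * d)
    (le_degree : ∀ v, (1 - ε) * d ≤ degreeIn G Finset.univ v)
    (degree_le : ∀ v, degreeIn G Finset.univ v ≤ (1 + ε) * d) :
    ∃ (χ : V → κ) (B : Finset V), IsBalancedColoring G χ B ε d := by
  set N : ℝ := (Fintype.card κ : ℝ)
  obtain ⟨χ, hχ⟩ := exists_coloring_deviation_sq_le (κ := κ) Finset.univ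
    fun v : V => {u | G.Adj v u}
  have filter_colorClass : ∀ v j, #{u ∈ ({u | G.Adj v u} : Finset V) | χ u = j} =
      degreeIn G (colorClass χ j) v := fun v j => by
    rw [degreeIn, colorClass, Finset.filter_comm]
  simp only [filter_colorClass] at hχ
  set f : V → κ → ℝ := fun v j => N * degreeIn G (colorClass χ j) v - degreeIn G Finset.univ v
  have sum_sq_le : ∑ v, ∑ j, f v j ^ 2 ≤ ε * Fintype.card V * (ε * d) ^ 2 := by
    calc _ ≤ ∑ v, N ^ 2 * degreeIn G Finset.univ v := hχ
      _ ≤ ∑ _v : V, N ^ 2 * (2 * d) := Finset.sum_le_sum fun v _ =>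
          mul_le_mul_of_nonneg_left ((degree_le v).trans (by nlinarith)) (sq_nonneg N)
      _ = Fintype.card V * (2 * N ^ 2 * d) := by
        rw [Finset.sum_const, Finset.card_univ, nsmul_eq_mul]
        ring
      _ ≤ Fintype.card V * (ε ^ 3 * d * d) := by gcongr
      _ = _ := by ring
  refine ⟨χ, ({v | ∃ j, ε * d < |f v j|} : Finset V), le_degree, degree_le, ?_, fun v hv j => ?_,
    fun v hv j => ?_⟩
  · exact le_of_mul_le_mul_right ((card_mul_sq_le_sum_sq (by positivity)).trans sum_sq_le)
      (by positivity)
  all_goals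
    have abs_f_le : |f v j| ≤ ε * d := not_lt.1 fun h =>
      hv (Finset.mem_filter.2 ⟨Finset.mem_univ v, j, h⟩)
  · linarith [(abs_le.1 abs_f_le).1, le_degree v]
  · linarith [(abs_le.1 abs_f_le).2, degree_le v]

namespace IsBalancedColoring

variable {χ : V → κ} {B : Finset V} {ε d : ℝ}

lemma sum_degree_le (hχ : IsBalancedColoring G χ B ε d) (S : Finset V) (j : V → κ) :
    Fintype.card κ * ∑ v ∈ S, (degreeIn G (colorClass χ (j v)) v : ℝ) ≤
      (#(S \ B) * (1 + 2 * ε) + #B * (Fintype.card κ * (1 + ε))) * d := by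
  rw [Finset.mul_sum, ← Finset.sum_sdiff (Finset.inter_subset_left : S ∩ B ⊆ S),
    Finset.sdiff_inter_self_left, add_mul, mul_assoc, mul_assoc]
  refine add_le_add ?_ ?_
  · rw [← nsmul_eq_mul]
    exact Finset.sum_le_card_nsmul _ _ _ fun v hv =>
      hχ.degree_colorClass_le v (Finset.mem_sdiff.1 hv).2 (j v)
  · refine (Finset.sum_le_sum_of_subset_of_nonneg Finset.inter_subset_right
      fun v _ _ => by positivity).trans ?_
    rw [← nsmul_eq_mul]
    refine Finset.sum_le_card_nsmul _ _ _ fun v _ => ?_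
    rw [mul_assoc]
    refine mul_le_mul_of_nonneg_left (le_trans ?_ (hχ.degree_le v)) (Nat.cast_nonneg _)
    exact Nat.cast_le.2 (degreeIn_mono (Finset.subset_univ _))

lemma le_sum_degree (hχ : IsBalancedColoring G χ B ε d) (S : Finset V) (j : V → κ) :
    #(S \ B) * ((1 - 2 * ε) * d) ≤
      Fintype.card κ * ∑ v ∈ S, (degreeIn G (colorClass χ (j v)) v : ℝ) := by
  rw [Finset.mul_sum, ← nsmul_eq_mul]
  refine (Finset.card_nsmul_le_sum _ _ _ fun v hv => ?_).trans
    (Finset.sum_le_sum_of_subset_of_nonneg Finset.sdiff_subset fun v _ _ => by positivity)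
  exact hχ.le_degree_colorClass v (Finset.mem_sdiff.1 hv).2 (j v)

lemma card_colorClass_bounds (hχ : IsBalancedColoring G χ B ε d) (hε : 0 ≤ ε) (hd : 0 < d)
    (hεκ : 10 * Fintype.card κ * ε ≤ 1) (j : κ) :
    (1 - 4 * ε) * Fintype.card V ≤ Fintype.card κ * #(colorClass χ j) ∧
      Fintype.card κ * (#(colorClass χ j) : ℝ) ≤ 2 * Fintype.card V := by
  set N : ℝ := (Fintype.card κ : ℝ)
  set n : ℝ := (Fintype.card V : ℝ)
  set c : ℝ := (#(colorClass χ j) : ℝ)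
  have hN : 1 ≤ N := Nat.one_le_cast.2 (Fintype.card_pos_iff.2 ⟨j⟩)
  have hB : (#B : ℝ) ≤ ε * n := hχ.card_exceptional_le
  have card_compl : (#(Finset.univ \ B) : ℝ) = n - #B := by
    rw [Finset.cast_card_sdiff (Finset.subset_univ B), Finset.card_univ]
  have handshake : ∑ v, (degreeIn G (colorClass χ j) v : ℝ) =
      ∑ u ∈ colorClass χ j, (degreeIn G Finset.univ u : ℝ) := mod_cast sum_degreeIn_comm _ _
  have sum_ge : c * ((1 - ε) * d) ≤ ∑ u ∈ colorClass χ j, (degreeIn G Finset.univ u : ℝ) := by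
    rw [← nsmul_eq_mul]
    exact Finset.card_nsmul_le_sum _ _ _ fun u _ => hχ.le_degree u
  have sum_le : ∑ u ∈ colorClass χ j, (degreeIn G Finset.univ u : ℝ) ≤ c * ((1 + ε) * d) := by
    rw [← nsmul_eq_mul]
    exact Finset.sum_le_card_nsmul _ _ _ fun u _ => hχ.degree_le u
  have lower : (n - #B) * (1 - 2 * ε) ≤ N * c * (1 + ε) := by
    have := hχ.le_sum_degree Finset.univ fun _ => j
    rw [handshake, card_compl] at this
    refine le_of_mul_le_mul_right ?_ hd
    nlinarith
  have upper : N * c * (1 - ε) ≤ (n - #B) * (1 + 2 * ε) + #B * (N * (1 + ε)) := by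
    have := hχ.sum_degree_le Finset.univ fun _ => j
    rw [handshake, card_compl] at this
    refine le_of_mul_le_mul_right ?_ hd
    nlinarith
  have hε' : ε ≤ 1 / 10 := by nlinarith
  have hεn : 0 ≤ ε * n := by positivity
  have hNc : 0 ≤ N * c := by positivity
  refine ⟨le_of_mul_le_mul_right (a := 1 + ε) ?_ (by linarith), ?_⟩
  · nlinarith [mul_nonneg hε hεn]
  · have : #B * (N * (1 + ε)) ≤ 11 / 100 * n := by
      calc #B * (N * (1 + ε)) ≤ ε * n * (N * (11 / 10)) := by gcongr; linarith
        _ ≤ 11 / 100 * n := by nlinarith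
    nlinarith

end IsBalancedColoring

end Coloring

section Matching

/- Hall's theorem, applied after giving every index `D` extra private targets. -/
lemma exists_injOn_of_card_le_card_biUnion_add {ι σ : Type*} [Fintype ι] [Nonempty σ]
    (t : ι → Finset σ) (D : ℕ) (h : ∀ S : Finset ι, #S ≤ #(S.biUnion t) + D) :
    ∃ (I : Finset ι) (f : ι → σ), Set.InjOn f I ∧ (∀ x ∈ I, f x ∈ t x) ∧
      Fintype.card ι ≤ #I + D := by
  obtain ⟨g, g_inj, hg⟩ := (Finset.all_card_le_biUnion_card_iff_exists_injective
      fun x => (t x).disjSum (Finset.univ : Finset (Fin D))).1 fun S => by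
    rcases S.eq_empty_or_nonempty with rfl | ⟨x, hx⟩
    · simp
    have biUnion_disjSum : S.biUnion (fun x => (t x).disjSum (Finset.univ : Finset (Fin D))) =
        (S.biUnion t).disjSum Finset.univ := by
      ext (a | a)
      · simp
      · simpa using ⟨x, hx⟩
    simpa [biUnion_disjSum] using h S
  set I : Finset ι := {x | (g x).isLeft}
  have left_of_mem : ∀ x ∈ I, ∃ a, g x = Sum.inl a := fun x hx =>
    Sum.isLeft_iff.1 (Finset.mem_filter.1 hx).2
  have card_compl : #Iᶜ ≤ D := by
    refine (Finset.card_le_card_of_injOn (t := Finset.univ.map ⟨Sum.inr, Sum.inr_injective⟩) g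
      (fun x hx => ?_) g_inj.injOn).trans_eq (by simp)
    have : (g x).isRight := by simpa [I] using hx
    obtain ⟨a, ha⟩ := Sum.isRight_iff.1 this
    simp [ha]
  refine ⟨I, fun x => (g x).elim id fun _ => Classical.arbitrary σ, fun x hx y hy hxy => ?_,
    fun x hx => ?_, ?_⟩
  · obtain ⟨a, ha⟩ := left_of_mem x hx
    obtain ⟨b, hb⟩ := left_of_mem y hy
    simp only [ha, hb, Sum.elim_inl, id_eq] at hxy
    exact g_inj (by rw [ha, hb, hxy])
  · obtain ⟨a, ha⟩ := left_of_mem x hx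
    simpa [ha] using hg x
  · rw [← Finset.card_add_card_compl I]
    exact Nat.add_le_add_left card_compl _

lemma eq_of_iterate_eq {σ : V → V} {I : Finset V} (σ_inj : Set.InjOn σ I) {x y : V} {i : ℕ}
    (hx : ∀ j < i, σ^[j] x ∈ I) (hy : ∀ j < i, σ^[j] y ∈ I) (h : σ^[i] x = σ^[i] y) : x = y := by
  induction i with
  | zero => exact h
  | succ i ih =>
    rw [Function.iterate_succ_apply', Function.iterate_succ_apply'] at h
    exact ih (fun j hj => hx j (by omega)) (fun j hj => hy j (by omega))
      (σ_inj (hx i i.lt_succ_self) (hy i i.lt_succ_self) h)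

variable {κ : Type*} [Fintype V] {χ : V → κ} {B : Finset V}

/-- The neighbours of `v` outside `B` whose colour is the successor of the colour of `v`. -/
noncomputable def nextNeighbors (G : SimpleGraph V) (χ : V → κ) (B : Finset V) (next : Equiv.Perm κ)
    (v : V) : Finset V :=
  {u | u ∉ B ∧ G.Adj v u ∧ χ u = next (χ v)}

lemma mem_nextNeighbors {next : Equiv.Perm κ} {u v : V} :
    u ∈ nextNeighbors G χ B next v ↔ u ∉ B ∧ G.Adj v u ∧ χ u = next (χ v) := by
  simp [nextNeighbors]

lemma sum_degreeIn_next_le (χ : V → κ) (next : Equiv.Perm κ) (B S : Finset V) :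
    ∑ v ∈ S, degreeIn G (colorClass χ (next (χ v))) v ≤
      ∑ u ∈ S.biUnion (nextNeighbors G χ B next) ∪ B,
        degreeIn G (colorClass χ (next.symm (χ u))) u := by
  set T : Finset V := S.biUnion (nextNeighbors G χ B next)
  calc ∑ v ∈ S, degreeIn G (colorClass χ (next (χ v))) v
      ≤ ∑ v ∈ S, #{u ∈ T ∪ B | G.Adj v u ∧ χ u = next (χ v)} :=
        Finset.sum_le_sum fun v hv => Finset.card_le_card fun u hu => by
          obtain ⟨hu, hvu⟩ := Finset.mem_filter.1 hu
          refine Finset.mem_filter.2 ⟨?_, hvu, mem_colorClass.1 hu⟩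
          by_cases huB : u ∈ B
          · exact Finset.mem_union_right T huB
          · exact Finset.mem_union_left B (Finset.mem_biUnion.2
              ⟨v, hv, mem_nextNeighbors.2 ⟨huB, hvu, mem_colorClass.1 hu⟩⟩)
    _ = ∑ u ∈ T ∪ B, #{v ∈ S | G.Adj v u ∧ χ u = next (χ v)} :=
        Finset.sum_card_bipartiteAbove_eq_sum_card_bipartiteBelow
          fun v u => G.Adj v u ∧ χ u = next (χ v)
    _ ≤ _ := Finset.sum_le_sum fun u _ => Finset.card_le_card fun v hv => by
        obtain ⟨-, hvu, hcol⟩ := Finset.mem_filter.1 hv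
        exact Finset.mem_filter.2
          ⟨mem_colorClass.2 ((Equiv.symm_apply_eq next).2 hcol).symm, hvu.symm⟩

variable [Fintype κ] {ε d : ℝ}

namespace IsBalancedColoring

lemma card_le_card_biUnion_add (hχ : IsBalancedColoring G χ B ε d) (hε : 0 ≤ ε) (hε1 : ε ≤ 1)
    (hd : 0 < d) (next : Equiv.Perm κ) {S : Finset V} (hS : Disjoint S B) :
    (#S : ℝ) ≤ #(S.biUnion (nextNeighbors G χ B next)) +
      6 * Fintype.card κ * ε * Fintype.card V := by
  set T : Finset V := S.biUnion (nextNeighbors G χ B next)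
  set N : ℝ := (Fintype.card κ : ℝ)
  set n : ℝ := (Fintype.card V : ℝ)
  rcases S.eq_empty_or_nonempty with rfl | ⟨v₀, -⟩
  · simp only [Finset.card_empty, Nat.cast_zero]
    positivity
  have hN : 1 ≤ N := Nat.one_le_cast.2 (Fintype.card_pos_iff.2 ⟨χ v₀⟩)
  have double_count := mul_le_mul_of_nonneg_left
    (Nat.cast_le (α := ℝ).2 (sum_degreeIn_next_le (G := G) χ next B S)) (zero_le_one.trans hN)
  push_cast at double_count
  have card_T : (#((T ∪ B) \ B) : ℝ) ≤ #T := by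
    rw [Finset.union_sdiff_right]
    exact Nat.cast_le.2 (Finset.card_le_card Finset.sdiff_subset)
  have expansion : #S * (1 - 2 * ε) ≤ #T * (1 + 2 * ε) + #B * (N * (1 + ε)) := by
    refine le_of_mul_le_mul_right ?_ hd
    calc #S * (1 - 2 * ε) * d = #(S \ B) * ((1 - 2 * ε) * d) := by
          rw [Finset.sdiff_eq_self_of_disjoint hS, mul_assoc]
      _ ≤ N * ∑ v ∈ S, (degreeIn G (colorClass χ (next (χ v))) v : ℝ) :=
          hχ.le_sum_degree S fun v => next (χ v)
      _ ≤ _ := double_count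
      _ ≤ _ := hχ.sum_degree_le (T ∪ B) fun u => next.symm (χ u)
      _ ≤ _ := by gcongr
  have card_le (U : Finset V) : ε * #U ≤ ε * n :=
    mul_le_mul_of_nonneg_left (Nat.cast_le.2 U.card_le_univ) hε
  have card_B_le : #B * (N * (1 + ε)) ≤ 2 * (N * (ε * n)) := by
    calc #B * (N * (1 + ε)) ≤ ε * n * (N * (1 + 1)) := by gcongr; exact hχ.card_exceptional_le
      _ = _ := by ring
  have : ε * n ≤ N * (ε * n) := le_mul_of_one_le_left (by positivity) hN
  linarith [card_le S, card_le T]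

lemma exists_matching [Nonempty V] (hχ : IsBalancedColoring G χ B ε d) (hε : 0 ≤ ε) (hε1 : ε ≤ 1)
    (hd : 0 < d) (next : Equiv.Perm κ) :
    ∃ (I : Finset V) (σ : V → V), Set.InjOn σ I ∧
      (∀ v ∈ I, v ∉ B ∧ G.Adj v (σ v) ∧ χ (σ v) = next (χ v)) ∧
      (#Iᶜ : ℝ) ≤ 7 * Fintype.card κ * ε * Fintype.card V := by
  set N : ℝ := (Fintype.card κ : ℝ)
  set n : ℝ := (Fintype.card V : ℝ)
  have hN : 1 ≤ N := Nat.one_le_cast.2 (Fintype.card_pos_iff.2 ⟨χ (Classical.arbitrary V)⟩)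
  have hεn : ε * n ≤ N * (ε * n) := le_mul_of_one_le_left (by positivity) hN
  set t : V → Finset V := fun v => if v ∈ B then ∅ else nextNeighbors G χ B next v with ht
  obtain ⟨I, σ, σ_inj, hσ, card_I⟩ :=
    exists_injOn_of_card_le_card_biUnion_add t ⌊7 * N * ε * n⌋₊ fun S => by
      have biUnion_subset : (S \ B).biUnion (nextNeighbors G χ B next) ⊆ S.biUnion t :=
        Finset.biUnion_subset.2 fun v hv => by
          obtain ⟨hvS, hvB⟩ := Finset.mem_sdiff.1 hv
          exact (if_neg hvB).superset.trans (Finset.subset_biUnion_of_mem t hvS)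
      have h_good := hχ.card_le_card_biUnion_add hε hε1 hd next (S := S \ B)
        Finset.sdiff_disjoint
      have h_card : (#S : ℝ) ≤ #(S \ B) + #B := mod_cast Finset.card_le_card_sdiff_add_card
      have : (#S : ℝ) ≤ #(S.biUnion t) + 7 * N * ε * n := by
        have := Nat.cast_le (α := ℝ).2 (Finset.card_le_card biUnion_subset)
        linarith [hχ.card_exceptional_le]
      rw [add_comm, ← Nat.floor_add_natCast (by positivity)]
      exact Nat.le_floor (by linarith)
  have mem_next : ∀ v ∈ I, v ∉ B ∧ σ v ∈ nextNeighbors G χ B next v := fun v hv => by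
    have := hσ v hv
    simp only [ht] at this
    split_ifs at this with hvB
    · simp at this
    · exact ⟨hvB, this⟩
  refine ⟨I, σ, σ_inj,
    fun v hv => ⟨(mem_next v hv).1, (mem_nextNeighbors.1 (mem_next v hv).2).2⟩, ?_⟩
  refine le_trans (Nat.cast_le.2 ?_) (Nat.floor_le (a := 7 * N * ε * n) (by positivity))
  rw [Finset.card_compl]
  omega

end IsBalancedColoring

end Matching

section PathSystem

/-- Vertex-disjoint paths of `G` with `ℓ` vertices each, together with `m` pairwise disjoint
reservoirs avoiding them. The `x`-th path is `vertex x 0, …, vertex x (ℓ - 1)`; the values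
`vertex x i` with `ℓ ≤ i` are irrelevant. -/
structure PathSystem (G : SimpleGraph V) (ι : Type*) (m ℓ : ℕ) where
  reservoir : Fin m → Finset V
  index : Finset ι
  vertex : ι → ℕ → V
  reservoir_disjoint : Pairwise fun j j' => Disjoint (reservoir j) (reservoir j')
  vertex_injective : ∀ x ∈ index, ∀ y ∈ index, ∀ i < ℓ, ∀ j < ℓ,
    vertex x i = vertex y j → x = y ∧ i = j
  adj : ∀ x ∈ index, ∀ i, i + 1 < ℓ → G.Adj (vertex x i) (vertex x (i + 1))
  vertex_notMem : ∀ x ∈ index, ∀ i < ℓ, ∀ j, vertex x i ∉ reservoir j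

/-- A path system with about `k |V| / N` paths and reservoirs of about `|V| / N` vertices, whose
path vertices have about `d / N` neighbours in every reservoir. -/
structure PathSystem.IsUniform {ι : Type*} {m ℓ : ℕ} [Fintype V] (P : PathSystem G ι m ℓ)
    (k N d : ℕ) : Prop where
  degree_le : ∀ v, degreeIn G Finset.univ v ≤ 2 * d
  card_reservoir_le : ∀ j, N * #(P.reservoir j) ≤ 2 * Fintype.card V
  le_card_index : k * Fintype.card V ≤ 2 * N * #P.index
  card_index_le : N * #P.index ≤ 2 * k * Fintype.card V
  le_degree : ∀ x ∈ P.index, ∀ i < ℓ, ∀ j,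
    d ≤ 2 * N * degreeIn G (P.reservoir j) (P.vertex x i)

/-- The colours used for path systems: one for each of the `m` reservoirs, and `ℓ` consecutive
ones for each of the `k` bundles of paths. -/
abbrev PathColor (m k ℓ : ℕ) : Type := Fin m ⊕ Fin k × ZMod ℓ

variable {m k ℓ : ℕ}

lemma card_pathColor [NeZero ℓ] : Fintype.card (PathColor m k ℓ) = m + k * ℓ := by
  simp [ZMod.card]

/-- The colour of the next vertex on a path, cyclically. -/
def PathColor.next : Equiv.Perm (PathColor m k ℓ) :=
  Equiv.sumCongr (Equiv.refl _) (Equiv.prodCongr (Equiv.refl _) (Equiv.addRight 1))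

variable {χ : V → PathColor m k ℓ} {σ : V → V} {I : Finset V}

lemma color_iterate (hσ : ∀ v ∈ I, χ (σ v) = PathColor.next (χ v)) {x : V} {b : Fin k}
    (hx : χ x = Sum.inr (b, 0)) {i : ℕ} (hi : ∀ j < i, σ^[j] x ∈ I) :
    χ (σ^[i] x) = Sum.inr (b, (i : ZMod ℓ)) := by
  induction i with
  | zero => simpa using hx
  | succ i ih =>
    rw [Function.iterate_succ_apply', hσ _ (hi i i.lt_succ_self),
      ih fun j hj => hi j (by omega)]
    simp [PathColor.next]

lemma iterate_injective (σ_inj : Set.InjOn σ I) (hσ : ∀ v ∈ I, χ (σ v) = PathColor.next (χ v))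
    {x y : V} {b c : Fin k} (hx : χ x = Sum.inr (b, 0)) (hy : χ y = Sum.inr (c, 0)) {i j : ℕ}
    (hi : i < ℓ) (hj : j < ℓ) (hxi : ∀ l < i, σ^[l] x ∈ I) (hyj : ∀ l < j, σ^[l] y ∈ I)
    (h : σ^[i] x = σ^[j] y) : x = y ∧ i = j := by
  have hcol := congrArg χ h
  rw [color_iterate hσ hx hxi, color_iterate hσ hy hyj] at hcol
  have hij : (i : ZMod ℓ) = j := (Prod.ext_iff.1 (Sum.inr.inj hcol)).2
  rw [ZMod.natCast_eq_natCast_iff', Nat.mod_eq_of_lt hi, Nat.mod_eq_of_lt hj] at hij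
  subst hij
  exact ⟨eq_of_iterate_eq σ_inj hxi hyj h, rfl⟩

variable [Fintype V]

/-- The vertices whose colour is the first one of some bundle. -/
noncomputable def firstVertices (χ : V → PathColor m k ℓ) : Finset V :=
  {x | ∃ b, χ x = Sum.inr (b, 0)}

lemma mem_firstVertices {x : V} : x ∈ firstVertices χ ↔ ∃ b, χ x = Sum.inr (b, 0) := by
  simp [firstVertices]

lemma card_firstVertices (χ : V → PathColor m k ℓ) :
    #(firstVertices χ) = ∑ b, #(colorClass χ (Sum.inr (b, 0))) := by
  rw [← Finset.card_biUnion fun b _ c _ hbc => Finset.disjoint_left.2 fun x hxb hxc => hbc ?_]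
  · congr 1
    ext x
    simp [mem_firstVertices, mem_colorClass]
  · have := (mem_colorClass.1 hxb).symm.trans (mem_colorClass.1 hxc)
    simpa using this

/-- The path system traced out by iterating `σ` along the colours of each bundle. -/
noncomputable def PathSystem.ofMatching (σ_inj : Set.InjOn σ I)
    (hσ : ∀ v ∈ I, G.Adj v (σ v) ∧ χ (σ v) = PathColor.next (χ v)) : PathSystem G V m ℓ where
  reservoir j := colorClass χ (Sum.inl j)
  index := {x ∈ firstVertices χ | ∀ i < ℓ, σ^[i] x ∈ I}
  vertex x i := σ^[i] x
  reservoir_disjoint j j' hjj' := Finset.disjoint_left.2 fun v hv hv' => hjj' <|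
    Sum.inl_injective ((mem_colorClass.1 hv).symm.trans (mem_colorClass.1 hv'))
  vertex_injective x hx y hy i hi j hj h := by
    obtain ⟨hx_first, hxI⟩ := Finset.mem_filter.1 hx
    obtain ⟨hy_first, hyI⟩ := Finset.mem_filter.1 hy
    obtain ⟨b, hb⟩ := mem_firstVertices.1 hx_first
    obtain ⟨c, hc⟩ := mem_firstVertices.1 hy_first
    exact iterate_injective σ_inj (fun v hv => (hσ v hv).2) hb hc hi hj
      (fun l hl => hxI l (hl.trans hi)) (fun l hl => hyI l (hl.trans hj)) h
  adj x hx i hi := by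
    rw [Function.iterate_succ_apply']
    exact (hσ _ ((Finset.mem_filter.1 hx).2 i (by omega))).1
  vertex_notMem x hx i hi j hmem := by
    obtain ⟨hx_first, hxI⟩ := Finset.mem_filter.1 hx
    obtain ⟨b, hb⟩ := mem_firstVertices.1 hx_first
    have := color_iterate (fun v hv => (hσ v hv).2) hb fun l hl => hxI l (hl.trans hi)
    exact Sum.inl_ne_inr ((mem_colorClass.1 hmem).symm.trans this)

/- A first vertex that starts no path is charged to the first of its iterates leaving `I`. -/
lemma card_firstVertices_le (σ_inj : Set.InjOn σ I)
    (hσ : ∀ v ∈ I, G.Adj v (σ v) ∧ χ (σ v) = PathColor.next (χ v)) :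
    #(firstVertices χ) ≤ #(PathSystem.ofMatching σ_inj hσ).index + #Iᶜ := by
  set lost : Finset V := {x ∈ firstVertices χ | ¬ ∀ i < ℓ, σ^[i] x ∈ I}
  have exists_first_exit : ∀ x ∈ lost, ∃ i < ℓ, σ^[i] x ∉ I ∧ ∀ j < i, σ^[j] x ∈ I :=
    fun x hx => by
      have h : ∃ i, i < ℓ ∧ σ^[i] x ∉ I := by
        have := (Finset.mem_filter.1 hx).2
        push Not at this
        exact this
      refine ⟨Nat.find h, (Nat.find_spec h).1, (Nat.find_spec h).2, fun j hj => ?_⟩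
      by_contra hjI
      exact Nat.find_min h hj ⟨hj.trans (Nat.find_spec h).1, hjI⟩
  choose! exit exit_lt exit_notMem mem_of_lt_exit using exists_first_exit
  rw [← Finset.card_filter_add_card_filter_not fun x => ∀ i < ℓ, σ^[i] x ∈ I]
  refine Nat.add_le_add_left (Finset.card_le_card_of_injOn (fun x => σ^[exit x] x)
    (fun x hx => Finset.mem_coe.2 (Finset.mem_compl.2 (exit_notMem x hx)))
    fun x hx y hy hxy => ?_) _
  obtain ⟨b, hb⟩ := mem_firstVertices.1 (Finset.mem_filter.1 hx).1
  obtain ⟨c, hc⟩ := mem_firstVertices.1 (Finset.mem_filter.1 hy).1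
  exact (iterate_injective σ_inj (fun v hv => (hσ v hv).2) hb hc (exit_lt x hx) (exit_lt y hy)
    (mem_of_lt_exit x hx) (mem_of_lt_exit y hy) hxy).1

lemma IsBalancedColoring.card_firstVertices_bounds [NeZero ℓ] {B : Finset V} {ε d : ℝ}
    (hχ : IsBalancedColoring G χ B ε d) (hε : 0 ≤ ε) (hd : 0 < d)
    (hεN : 10 * Fintype.card (PathColor m k ℓ) * ε ≤ 1) :
    k * ((1 - 4 * ε) * Fintype.card V) ≤
        Fintype.card (PathColor m k ℓ) * #(firstVertices χ) ∧
      Fintype.card (PathColor m k ℓ) * (#(firstVertices χ) : ℝ) ≤ k * (2 * Fintype.card V) := by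
  have hclass b := hχ.card_colorClass_bounds hε hd hεN (Sum.inr (b, 0))
  rw [card_firstVertices, Nat.cast_sum, Finset.mul_sum]
  have card_fin : #(Finset.univ : Finset (Fin k)) = k := by simp
  constructor
  · have := Finset.card_nsmul_le_sum Finset.univ _ _ fun b _ => (hclass b).1
    rwa [nsmul_eq_mul, card_fin] at this
  · have := Finset.sum_le_card_nsmul Finset.univ _ _ fun b _ => (hclass b).2
    rwa [nsmul_eq_mul, card_fin] at this

lemma IsBalancedColoring.le_card_index [NeZero ℓ] {B : Finset V} {ε η d : ℝ}
    (hχ : IsBalancedColoring G χ B ε d) (hε : 0 ≤ ε) (hd : 0 < d)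
    (hεN : 10 * Fintype.card (PathColor m k ℓ) * ε ≤ 1)
    (hεη : 11 * (Fintype.card (PathColor m k ℓ)) ^ 2 * ε ≤ k * η)
    (hkN : k ≤ Fintype.card (PathColor m k ℓ) ^ 2) (σ_inj : Set.InjOn σ I)
    (hσ : ∀ v ∈ I, G.Adj v (σ v) ∧ χ (σ v) = PathColor.next (χ v))
    (card_compl : (#Iᶜ : ℝ) ≤ 7 * Fintype.card (PathColor m k ℓ) * ε * Fintype.card V) :
    (1 - η) * (k * Fintype.card V) ≤
      Fintype.card (PathColor m k ℓ) * #(PathSystem.ofMatching σ_inj hσ).index := by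
  set N : ℕ := Fintype.card (PathColor m k ℓ)
  set n : ℕ := Fintype.card V
  have charge : (#(firstVertices χ) : ℝ) ≤ #(PathSystem.ofMatching σ_inj hσ).index + #Iᶜ :=
    mod_cast card_firstVertices_le σ_inj hσ
  have loss : (4 * k * ε + 7 * N ^ 2 * ε) * n ≤ k * η * n := by
    have : (k : ℝ) ≤ N ^ 2 := mod_cast hkN
    gcongr
    nlinarith
  have := mul_le_mul_of_nonneg_left (charge.trans (add_le_add_right card_compl _))
    (Nat.cast_nonneg (α := ℝ) N)
  linarith [(hχ.card_firstVertices_bounds hε hd hεN).1]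

lemma IsBalancedColoring.exists_isUniform [NeZero ℓ] [Nonempty V] {B : Finset V} {ε η : ℝ}
    {N d : ℕ} (hχ : IsBalancedColoring G χ B ε d) (hN : Fintype.card (PathColor m k ℓ) = N)
    (hε : 0 ≤ ε) (hη : η ≤ 1 / 2) (hd : 0 < d) (hεN : 11 * N * ε ≤ 1)
    (hεη : 11 * N ^ 2 * ε ≤ k * η) (hkN : k ≤ N ^ 2) :
    ∃ P : PathSystem G V m ℓ, P.IsUniform k N d ∧
      (1 - η) * (k * Fintype.card V) ≤ N * #P.index := by
  subst hN
  set N : ℕ := Fintype.card (PathColor m k ℓ)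
  set n : ℕ := Fintype.card V
  have hd' : (0 : ℝ) < d := Nat.cast_pos.2 hd
  have one_le_N : (1 : ℝ) ≤ N := Nat.one_le_cast.2
    (Fintype.card_pos_iff.2 ⟨χ (Classical.arbitrary V)⟩)
  have hεN' : 10 * N * ε ≤ 1 := le_trans (by gcongr; norm_num) hεN
  have hε1 : 11 * ε ≤ 1 := le_trans (by nlinarith) hεN
  obtain ⟨I, σ, σ_inj, hσ, card_compl⟩ := hχ.exists_matching hε (by linarith) hd' PathColor.next
  set P := PathSystem.ofMatching σ_inj fun v hv => (hσ v hv).2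
  have le_card_index : (1 - η) * (k * n) ≤ N * #P.index :=
    hχ.le_card_index hε hd' hεN' hεη hkN σ_inj _ card_compl
  refine ⟨P, ⟨fun v => ?_, fun j => ?_, ?_, ?_, fun x hx i hi j => ?_⟩, le_card_index⟩
  · have : (degreeIn G Finset.univ v : ℝ) ≤ 2 * d :=
      (hχ.degree_le v).trans (mul_le_mul_of_nonneg_right (by linarith) hd'.le)
    exact_mod_cast this
  · exact_mod_cast (hχ.card_colorClass_bounds hε hd' hεN' (Sum.inl j)).2
  · have : (1 / 2 : ℝ) * (k * n) ≤ (1 - η) * (k * n) := by gcongr; linarith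
    have : (k * n : ℝ) ≤ 2 * N * #P.index := by linarith
    exact_mod_cast this
  · have : (#P.index : ℝ) ≤ #(firstVertices χ) :=
      Nat.cast_le.2 (Finset.card_le_card (Finset.filter_subset _ _))
    have := mul_le_mul_of_nonneg_left this (zero_le_one.trans one_le_N)
    have : (N * #P.index : ℝ) ≤ 2 * k * n := by
      linarith [(hχ.card_firstVertices_bounds hε hd' hεN').2]
    exact_mod_cast this
  · have := hχ.le_degree_colorClass _ (hσ _ ((Finset.mem_filter.1 hx).2 i hi)).1 (Sum.inl j)
    have half : (1 / 2 : ℝ) * d ≤ (1 - 2 * ε) * d := by gcongr; linarith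
    have : (d : ℝ) ≤ 2 * N * degreeIn G (P.reservoir j) (P.vertex x i) := by
      change (d : ℝ) ≤ 2 * N * degreeIn G (colorClass χ (Sum.inl j)) (σ^[i] x)
      linarith
    exact_mod_cast this

theorem exists_pathSystem_isUniform [NeZero ℓ] [Nonempty V] {N d : ℕ} {ε η : ℝ}
    (hN : m + k * ℓ = N) (hk : 0 < k) (hε : 0 < ε) (hη : η ≤ 1 / 2)
    (hεη : 11 * N ^ 2 * ε ≤ η) (hdN : 2 * (N : ℝ) ^ 2 ≤ ε ^ 3 * d)
    (le_degree : ∀ v, (1 - ε) * d ≤ degreeIn G Finset.univ v)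
    (degree_le : ∀ v, degreeIn G Finset.univ v ≤ (1 + ε) * d) :
    ∃ P : PathSystem G V m ℓ, P.IsUniform k N d ∧
      (1 - η) * (k * Fintype.card V) ≤ N * #P.index := by
  have card_color : Fintype.card (PathColor m k ℓ) = N := card_pathColor.trans hN
  have hkN : k ≤ N := by
    have := Nat.le_mul_of_pos_right k (NeZero.pos ℓ)
    omega
  have hN1 : (1 : ℝ) ≤ N := Nat.one_le_cast.2 (hk.trans_le hkN)
  have : Nonempty (PathColor m k ℓ) := ⟨Sum.inr (⟨0, hk⟩, 0)⟩
  have hεN : 11 * N * ε ≤ 1 := by nlinarith [mul_le_mul_of_nonneg_right hN1 hε.le]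
  have hε1 : ε ≤ 1 := by nlinarith
  have hd : 0 < d := Nat.pos_of_ne_zero fun h => by
    rw [h, Nat.cast_zero, mul_zero] at hdN
    nlinarith
  obtain ⟨χ, B, hχ⟩ := exists_isBalancedColoring (κ := PathColor m k ℓ) hε hε1
    (Nat.cast_pos.2 hd) (by rwa [card_color]) le_degree degree_le
  have hη0 : 0 ≤ η := le_trans (by positivity) hεη
  refine hχ.exists_isUniform card_color hε.le hη hd hεN (hεη.trans ?_)
    (hkN.trans (Nat.le_self_pow two_ne_zero N))
  exact le_mul_of_one_le_left (by positivity) (Nat.one_le_cast.2 hk)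

end PathSystem

section Packing

lemma exists_isPath_of_forall_adj {f : ℕ → V} {a b : ℕ} (hab : a ≤ b)
    (f_inj : Set.InjOn f (Set.Icc a b)) (hf : ∀ i, a ≤ i → i < b → G.Adj (f i) (f (i + 1))) :
    ∃ p : G.Walk (f a) (f b), p.IsPath ∧ {v | v ∈ p.support} = f '' Set.Icc a b := by
  induction b, hab using Nat.le_induction with
  | base => exact ⟨Walk.nil, Walk.IsPath.nil, by simp⟩
  | succ b hab ih =>
    obtain ⟨p, hp, hp_support⟩ := ih
      (f_inj.mono (Set.Icc_subset_Icc_right b.le_succ)) fun i hi hib => hf i hi (by omega)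
    have notMem : f (b + 1) ∉ p.support := fun hmem => by
      obtain ⟨i, hi, h⟩ := hp_support.subset hmem
      have := f_inj ⟨hi.1, hi.2.trans b.le_succ⟩ ⟨by omega, le_rfl⟩ h
      have := hi.2
      omega
    refine ⟨p.concat (hf b hab b.lt_succ_self), hp.concat notMem _, ?_⟩
    have : Set.Icc a (b + 1) = Set.Icc a b ∪ {b + 1} := by
      ext i
      simp only [Set.mem_Icc, Set.mem_union, Set.mem_singleton_iff]
      omega
    rw [this, Set.image_union, ← hp_support]
    ext v
    simp [Walk.support_concat, or_comm]

lemma exists_isPath_extend {x y u v : V} {p : G.Walk x y} (hp : p.IsPath) (hux : G.Adj u x)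
    (hyv : G.Adj y v) (hu : u ∉ p.support) (hv : v ∉ p.support) (huv : u ≠ v) :
    ∃ q : G.Walk u v, q.IsPath ∧ q.toSubgraph.verts = {u, v} ∪ {w | w ∈ p.support} := by
  refine ⟨Walk.cons hux (p.concat hyv), (hp.concat hv hyv).cons ?_, ?_⟩
  · simp [Walk.support_concat, hu, huv]
  · ext w
    simp only [Walk.verts_toSubgraph, Walk.support_cons, Walk.support_concat, List.mem_cons,
      List.mem_append, List.not_mem_nil, Set.mem_ofPred_eq, Set.mem_union, Set.mem_insert_iff,
      Set.mem_singleton_iff, or_false]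
    tauto

namespace PathSystem

variable {ι : Type*} {m ℓ : ℕ} (P : PathSystem G ι m ℓ)

lemma disjoint_image_vertex {x y : ι} (hx : x ∈ P.index) (hy : y ∈ P.index) (hxy : x ≠ y) :
    Disjoint (P.vertex x '' Set.Iio ℓ) (P.vertex y '' Set.Iio ℓ) :=
  Set.disjoint_left.2 fun v => by
    rintro ⟨i, hi, rfl⟩ ⟨j, hj, h⟩
    exact hxy (P.vertex_injective y hy x hx j hj i hi h).1.symm

lemma injOn_vertex {x : ι} (hx : x ∈ P.index) : Set.InjOn (P.vertex x) (Set.Iio ℓ) :=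
  fun i hi j hj h => (P.vertex_injective x hx x hx i hi j hj h).2

variable {P}

lemma isLinkFamily {j : Fin m} {S : Finset V} (hS : S ⊆ P.reservoir j) {T : Finset ι}
    (hT : T ⊆ P.index) {a b : ι → ℕ} (hab : ∀ x ∈ T, a x ≤ b x) (hb : ∀ x ∈ T, b x < ℓ) :
    IsLinkFamily G (Subtype.val : S → V) T (fun x => P.vertex x '' Set.Icc (a x) (b x))
      (fun x => {u | G.Adj (P.vertex x (a x)) u}) (fun x => {u | G.Adj (P.vertex x (b x)) u}) where
  injective := Subtype.val_injective
  disjoint_range x hx := Set.disjoint_left.2 fun v => by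
    rintro ⟨i, hi, rfl⟩ ⟨u, hu⟩
    exact P.vertex_notMem x (hT hx) i (hi.2.trans_lt (hb x hx)) j (hu ▸ hS u.2)
  pairwiseDisjoint x hx y hy hxy := (P.disjoint_image_vertex (hT hx) (hT hy) hxy).mono
    (Set.image_mono fun i hi => hi.2.trans_lt (hb x hx))
    (Set.image_mono fun i hi => hi.2.trans_lt (hb y hy))
  exists_isPath x hx u hu v hv huv := by
    have Icc_subset : Set.Icc (a x) (b x) ⊆ Set.Iio ℓ := fun i hi => hi.2.trans_lt (hb x hx)
    obtain ⟨p, hp, hp_support⟩ := exists_isPath_of_forall_adj (G := G) (hab x hx)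
      ((P.injOn_vertex (hT hx)).mono Icc_subset)
      fun i _ hi => P.adj x (hT hx) i (by have := hb x hx; omega)
    have notMem (w : S) : w.1 ∉ p.support := fun hmem => by
      obtain ⟨i, hi, h⟩ := hp_support.subset hmem
      exact P.vertex_notMem x (hT hx) i (Icc_subset hi) j (h ▸ hS w.2)
    rw [← hp_support]
    exact exists_isPath_extend hp (Finset.mem_filter.1 hu).2.symm (Finset.mem_filter.1 hv).2
      (notMem u) (notMem v) (Subtype.val_injective.ne huv)

/-- The vertices of the paths indexed by `J` and of the set `X`. -/
def span (P : PathSystem G ι m ℓ) (J : Finset ι) (X : Finset V) : Set V :=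
  X ∪ ⋃ x ∈ J, P.vertex x '' Set.Iio ℓ

lemma span_mono {J J' : Finset ι} {X X' : Finset V} (hJ : J ⊆ J') (hX : X ⊆ X') :
    P.span J X ⊆ P.span J' X' :=
  Set.union_subset_union (Finset.coe_subset.2 hX) (Set.biUnion_subset_biUnion_left hJ)

lemma disjoint_span {J J' : Finset ι} {X X' : Finset V} (hJ : J ⊆ P.index) (hJ' : J' ⊆ P.index)
    (hX : ∀ v ∈ X, ∃ j, v ∈ P.reservoir j) (hX' : ∀ v ∈ X', ∃ j, v ∈ P.reservoir j)
    (hJJ' : Disjoint J J') (hXX' : Disjoint X X') : Disjoint (P.span J X) (P.span J' X') := by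
  have disjoint_paths {J : Finset ι} {X : Finset V} (hJ : J ⊆ P.index)
      (hX : ∀ v ∈ X, ∃ j, v ∈ P.reservoir j) :
      Disjoint (X : Set V) (⋃ x ∈ J, P.vertex x '' Set.Iio ℓ) := by
    refine Set.disjoint_iUnion₂_right.2 fun x hx => Set.disjoint_left.2 fun v hv => ?_
    rintro ⟨i, hi, rfl⟩
    obtain ⟨j, hj⟩ := hX _ hv
    exact P.vertex_notMem x (hJ hx) i hi j hj
  refine Set.disjoint_union_left.2 ⟨Set.disjoint_union_right.2
    ⟨Finset.disjoint_coe.2 hXX', disjoint_paths hJ' hX⟩, Set.disjoint_union_right.2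
    ⟨(disjoint_paths hJ hX').symm, ?_⟩⟩
  refine Set.disjoint_iUnion₂_left.2 fun x hx => Set.disjoint_iUnion₂_right.2 fun y hy =>
    P.disjoint_image_vertex (hJ hx) (hJ' hy) fun h => ?_
  exact Finset.disjoint_left.1 hJJ' hx (h ▸ hy)

/-- `𝒞` is a collection of disjoint `F`-subdivisions built from the paths indexed by `J` and the
set `X` of reservoir vertices, and it covers on average at least `c` vertices per path of `J`. -/
structure IsPacking (P : PathSystem G ι m ℓ) (F : SimpleGraph α) (c : ℕ) (𝒞 : Set G.Subgraph)
    (J : Finset ι) (X : Finset V) : Prop where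
  isSubdivision : ∀ H ∈ 𝒞, F.IsSubdivision H.coe
  pairwise_disjoint : 𝒞.Pairwise fun H₁ H₂ => Disjoint H₁.verts H₂.verts
  verts_subset : ∀ H ∈ 𝒞, H.verts ⊆ P.span J X
  mul_le_ncard : #J * c ≤ (⋃ H ∈ 𝒞, H.verts).ncard
  subset_index : J ⊆ P.index
  exists_mem_reservoir : ∀ v ∈ X, ∃ j, v ∈ P.reservoir j
  card_le : #X ≤ 2 * #J

lemma isPacking_empty (P : PathSystem G ι m ℓ) (F : SimpleGraph α) (c : ℕ) :
    P.IsPacking F c ∅ ∅ ∅ := by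
  constructor <;> simp

lemma IsPacking.union [Finite V] {c : ℕ} {𝒞 𝒞' : Set G.Subgraph} {J J' : Finset ι}
    {X X' : Finset V} (h : P.IsPacking F c 𝒞 J X) (h' : P.IsPacking F c 𝒞' J' X')
    (hJ : Disjoint J J') (hX : Disjoint X X') :
    P.IsPacking F c (𝒞 ∪ 𝒞') (J ∪ J') (X ∪ X') := by
  have disjoint_verts : ∀ H ∈ 𝒞, ∀ H' ∈ 𝒞', Disjoint H.verts H'.verts := fun H hH H' hH' =>
    (disjoint_span h.subset_index h'.subset_index h.exists_mem_reservoir h'.exists_mem_reservoir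
      hJ hX).mono (h.verts_subset H hH) (h'.verts_subset H' hH')
  refine ⟨?_, ?_, ?_, ?_, Finset.union_subset h.subset_index h'.subset_index, ?_, ?_⟩
  · rintro H (hH | hH)
    exacts [h.isSubdivision H hH, h'.isSubdivision H hH]
  · refine Set.pairwise_union.2
      ⟨h.pairwise_disjoint, h'.pairwise_disjoint, fun H hH H' hH' _ =>
        ⟨disjoint_verts H hH H' hH', (disjoint_verts H hH H' hH').symm⟩⟩
  · rintro H (hH | hH)
    exacts [(h.verts_subset H hH).trans
        (span_mono Finset.subset_union_left Finset.subset_union_left),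
      (h'.verts_subset H hH).trans (span_mono Finset.subset_union_right Finset.subset_union_right)]
  · rw [Set.biUnion_union, Set.ncard_union_eq (Set.disjoint_iUnion₂_left.2 fun H hH =>
      Set.disjoint_iUnion₂_right.2 fun H' hH' => disjoint_verts H hH H' hH'),
      Finset.card_union_of_disjoint hJ, add_mul]
    exact Nat.add_le_add h.mul_le_ncard h'.mul_le_ncard
  · intro v hv
    exact (Finset.mem_union.1 hv).elim (h.exists_mem_reservoir v) (h'.exists_mem_reservoir v)
  · rw [Finset.card_union_of_disjoint hJ]
    have := Finset.card_union_le X X'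
    have := h.card_le
    have := h'.card_le
    omega

lemma card_mul_le_ncard {J : Finset ι} (hJ : J ⊆ P.index) {a b : ι → ℕ} {c : ℕ}
    (hb : ∀ x ∈ J, b x < ℓ) (hc : ∀ x ∈ J, a x + c ≤ b x + 1) :
    #J * c ≤ (⋃ x ∈ J, P.vertex x '' Set.Icc (a x) (b x)).ncard := by
  have coe_biUnion : ((J.biUnion fun x => (Finset.Icc (a x) (b x)).image (P.vertex x) : Finset V) :
      Set V) = ⋃ x ∈ J, P.vertex x '' Set.Icc (a x) (b x) := by
    simp
  have Icc_subset : ∀ x ∈ J, ((Finset.Icc (a x) (b x) : Finset ℕ) : Set ℕ) ⊆ Set.Iio ℓ :=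
    fun x hx i hi => (Finset.mem_Icc.1 hi).2.trans_lt (hb x hx)
  rw [← coe_biUnion, Set.ncard_coe_finset, Finset.card_biUnion fun x hx y hy hxy => by
    rw [Function.onFun, ← Finset.disjoint_coe, Finset.coe_image, Finset.coe_image]
    exact (P.disjoint_image_vertex (hJ hx) (hJ hy) hxy).mono
      (Set.image_mono (Icc_subset x hx)) (Set.image_mono (Icc_subset y hy))]
  refine Finset.card_nsmul_le_sum J _ c fun x hx => ?_
  rw [Finset.card_image_of_injOn ((P.injOn_vertex (hJ hx)).mono (Icc_subset x hx)), Nat.card_Icc]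
  have := hc x hx
  omega

theorem exists_isPacking_singleton.{u, w} {α : Type u} {V : Type w} [Finite V] [Nonempty α]
    {F : SimpleGraph α} {G : SimpleGraph V} {P : PathSystem G ι m ℓ} {C c : ℕ}
    (hFC : ForcesSubdivision.{u, w} F C) (hF : ∀ a, ∃ b, F.Adj a b) {j : Fin m} {S : Finset V}
    (hS : S ⊆ P.reservoir j) {T : Finset ι} (hT : T ⊆ P.index) (T_ne : T.Nonempty)
    {a b : ι → ℕ} (hab : ∀ x ∈ T, a x ≤ b x) (hb : ∀ x ∈ T, b x < ℓ)
    (hc : ∀ x ∈ T, a x + c ≤ b x + 1)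
    (h_first : ∀ x ∈ T, C + 1 ≤ degreeIn G S (P.vertex x (a x)))
    (h_last : ∀ x ∈ T, C + 1 ≤ degreeIn G S (P.vertex x (b x))) (hC : C * #S ≤ 2 * #T) :
    ∃ H, ∃ J ⊆ T, ∃ X ⊆ S, J.Nonempty ∧ P.IsPacking F c {H} J X := by
  have card_adj (v : V) : #({u | G.Adj v u} : Finset S) = degreeIn G S v := by
    rw [degreeIn, ← Finset.card_map (Function.Embedding.subtype _)]
    congr 1
    ext u
    simp [and_comm]
  obtain ⟨X, J, hJT, J_ne, card_X, H, H_verts, hH⟩ :=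
    hFC.exists_of_isLinkFamily hF (isLinkFamily hS hT hab hb) T_ne
      (fun x hx => (h_first x hx).trans_eq (card_adj _).symm)
      (fun x hx => (h_last x hx).trans_eq (card_adj _).symm) (by rwa [Fintype.card_coe])
  set X' : Finset V := X.map (Function.Embedding.subtype _)
  have coe_X' : (X' : Set V) = Subtype.val '' (X : Set S) := by simp [X']
  have X'_subset : X' ⊆ S := Finset.map_subtype_subset X
  rw [← coe_X'] at H_verts
  refine ⟨H, J, hJT, X', X'_subset, J_ne, ?_⟩
  refine ⟨by rintro _ rfl; exact hH, Set.pairwise_singleton _ _, ?_, ?_, hJT.trans hT,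
    fun v hv => ⟨j, hS (X'_subset hv)⟩, by rwa [Finset.card_map]⟩
  · rintro _ rfl
    rw [H_verts]
    exact Set.union_subset_union_right _ (Set.iUnion₂_mono fun x hx =>
      Set.image_mono fun i hi => hi.2.trans_lt (hb x (hJT hx)))
  · rw [Set.biUnion_singleton, H_verts]
    exact (card_mul_le_ncard (hJT.trans hT) (fun x hx => hb x (hJT hx))
      fun x hx => hc x (hJT hx)).trans (Set.ncard_le_ncard Set.subset_union_right)

end PathSystem

end Packing

section Greedy

lemma exists_card_mul_card_inter_le {κ : Type*} [Fintype κ] [Nonempty κ] {R : κ → Finset V}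
    (hR : Pairwise fun j j' => Disjoint (R j) (R j')) (X : Finset V) :
    ∃ j, Fintype.card κ * #(X ∩ R j) ≤ #X := by
  have sum_le : ∑ j, #(X ∩ R j) ≤ #X := by
    rw [← Finset.card_biUnion fun i _ j _ hij =>
      (hR hij).mono Finset.inter_subset_right Finset.inter_subset_right]
    exact Finset.card_le_card (Finset.biUnion_subset.2 fun j _ => Finset.inter_subset_left)
  obtain ⟨j, -, hj⟩ := Finset.exists_min_image Finset.univ (fun j => #(X ∩ R j))
    Finset.univ_nonempty
  exact ⟨j, (Finset.card_nsmul_le_sum Finset.univ _ _ hj).trans sum_le⟩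

lemma card_filter_lt_degreeIn_le [Fintype V] {d c : ℕ} (hd : 0 < d)
    (degree_le : ∀ v, degreeIn G Finset.univ v ≤ 2 * d) (Q : Finset V) :
    #{v | d < c * degreeIn G Q v} ≤ 2 * c * #Q := by
  refine Nat.le_of_mul_le_mul_right ?_ hd
  calc #{v | d < c * degreeIn G Q v} * d
      ≤ ∑ v with d < c * degreeIn G Q v, c * degreeIn G Q v :=
        Finset.card_nsmul_le_sum _ _ _ fun v hv => (Finset.mem_filter.1 hv).2.le
    _ ≤ ∑ v, c * degreeIn G Q v := Finset.sum_le_sum_of_subset (Finset.subset_univ _)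
    _ = c * ∑ u ∈ Q, degreeIn G Finset.univ u := by rw [← Finset.mul_sum, sum_degreeIn_comm]
    _ ≤ c * (#Q * (2 * d)) :=
        Nat.mul_le_mul_left c (Finset.sum_le_card_nsmul _ _ _ fun u _ => degree_le u)
    _ = 2 * c * #Q * d := by ring

lemma degreeIn_le_add_inter (A X : Finset V) (v : V) :
    degreeIn G A v ≤ degreeIn G (A \ X) v + degreeIn G (X ∩ A) v := by
  refine (Finset.card_le_card fun u hu => ?_).trans (Finset.card_union_le _ _)
  obtain ⟨huA, hvu⟩ := Finset.mem_filter.1 hu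
  by_cases huX : u ∈ X <;> simp [huA, hvu, huX]

namespace PathSystem

variable {ι : Type*} {m ℓ : ℕ} {P : PathSystem G ι m ℓ}

lemma card_mul_card_filter_vertex_mem_le (A : Finset ℕ) (hA : ∀ i ∈ A, i < ℓ) {U : Finset ι}
    (hU : U ⊆ P.index) (W : Finset V) : #A * #{x ∈ U | ∀ i ∈ A, P.vertex x i ∈ W} ≤ #W := by
  rw [← Finset.card_product]
  refine Finset.card_le_card_of_injOn (fun z => P.vertex z.2 z.1) (fun z hz => ?_)
    fun z hz z' hz' h => ?_
  · obtain ⟨hi, hx⟩ := Finset.mem_product.1 hz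
    exact (Finset.mem_filter.1 hx).2 _ hi
  · obtain ⟨hi, hx⟩ := Finset.mem_product.1 hz
    obtain ⟨hi', hx'⟩ := Finset.mem_product.1 hz'
    obtain ⟨h₁, h₂⟩ := P.vertex_injective _ (hU (Finset.mem_filter.1 hx).1) _
      (hU (Finset.mem_filter.1 hx').1) _ (hA _ hi) _ (hA _ hi') h
    exact Prod.ext h₂ h₁

/- The end parts of length `h` of the paths are disjoint, so `W` contains at most `2 #W / h`. -/
lemma exists_vertex_notMem {h : ℕ} (hhℓ : h ≤ ℓ) {U : Finset ι} (hU : U ⊆ P.index)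
    (W : Finset V) :
    ∃ T ⊆ U, ∃ a b : ι → ℕ, h * #U ≤ h * #T + 2 * #W ∧ (∀ x ∈ T, a x < h) ∧
      (∀ x ∈ T, ℓ - h ≤ b x ∧ b x < ℓ) ∧
      ∀ x ∈ T, P.vertex x (a x) ∉ W ∧ P.vertex x (b x) ∉ W := by
  set D₁ : Finset ι := {x ∈ U | ∀ i ∈ Finset.range h, P.vertex x i ∈ W}
  set D₂ : Finset ι := {x ∈ U | ∀ i ∈ Finset.Ico (ℓ - h) ℓ, P.vertex x i ∈ W}
  have hD₁ : h * #D₁ ≤ #W := by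
    have := card_mul_card_filter_vertex_mem_le (Finset.range h)
      (fun i hi => (Finset.mem_range.1 hi).trans_le hhℓ) hU W
    rwa [Finset.card_range] at this
  have hD₂ : h * #D₂ ≤ #W := by
    have := card_mul_card_filter_vertex_mem_le (Finset.Ico (ℓ - h) ℓ)
      (fun i hi => (Finset.mem_Ico.1 hi).2) hU W
    rwa [Nat.card_Ico, Nat.sub_sub_self hhℓ] at this
  have exists_first : ∀ x ∈ (U \ D₁) \ D₂, ∃ i < h, P.vertex x i ∉ W := fun x hx => by
    have hx := Finset.mem_sdiff.1 (Finset.mem_sdiff.1 hx).1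
    simpa [D₁, hx.1] using hx.2
  have exists_last : ∀ x ∈ (U \ D₁) \ D₂, ∃ i, (ℓ - h ≤ i ∧ i < ℓ) ∧ P.vertex x i ∉ W :=
    fun x hx => by
      obtain ⟨hxU, hxD₂⟩ := Finset.mem_sdiff.1 hx
      simpa [D₂, (Finset.mem_sdiff.1 hxU).1, and_assoc] using hxD₂
  choose! a ha haW using exists_first
  choose! b hb hbW using exists_last
  refine ⟨(U \ D₁) \ D₂, Finset.sdiff_subset.trans Finset.sdiff_subset, a, b, ?_, ha, hb,
    fun x hx => ⟨haW x hx, hbW x hx⟩⟩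
  have card_U : #U ≤ #((U \ D₁) \ D₂) + #D₂ + #D₁ :=
    Finset.card_le_card_sdiff_add_card.trans
      (Nat.add_le_add_right Finset.card_le_card_sdiff_add_card _)
  have := Nat.mul_le_mul_left h card_U
  linarith

namespace IsUniform

variable [Fintype V] {k N d h s C : ℕ}

lemma le_degreeIn_sdiff (hP : P.IsUniform k N d) (hN : 0 < N) (hd : 4 * N * C ≤ d) {x : ι}
    (hx : x ∈ P.index) {i : ℕ} (hi : i < ℓ) {j : Fin m} {X : Finset V}
    (h : 4 * N * degreeIn G (X ∩ P.reservoir j) (P.vertex x i) ≤ d) :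
    C ≤ degreeIn G (P.reservoir j \ X) (P.vertex x i) := by
  have := Nat.mul_le_mul_left (2 * N)
    (degreeIn_le_add_inter (G := G) (P.reservoir j) X (P.vertex x i))
  have := hP.le_degree x hx i hi j
  refine Nat.le_of_mul_le_mul_left ?_ (by positivity : 0 < 4 * N)
  linarith

lemma mul_card_reservoir_sdiff_le (hP : P.IsUniform k N d) (hN : 0 < N) (hs : 0 < s)
    (hk : 4 * C * s ≤ k) {T : Finset ι} (hT : k * Fintype.card V ≤ 4 * N * s * #T) (j : Fin m)
    (X : Finset V) : C * #(P.reservoir j \ X) ≤ 2 * #T := by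
  have card_sdiff : N * #(P.reservoir j \ X) ≤ 2 * Fintype.card V :=
    (Nat.mul_le_mul_left N (Finset.card_le_card Finset.sdiff_subset)).trans
      (hP.card_reservoir_le j)
  refine Nat.le_of_mul_le_mul_left ?_ (by positivity : 0 < 2 * N * s)
  calc 2 * N * s * (C * #(P.reservoir j \ X)) = 2 * C * s * (N * #(P.reservoir j \ X)) := by ring
    _ ≤ 2 * C * s * (2 * Fintype.card V) := Nat.mul_le_mul_left _ card_sdiff
    _ = 4 * C * s * Fintype.card V := by ring
    _ ≤ k * Fintype.card V := Nat.mul_le_mul_right _ hk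
    _ ≤ 2 * N * s * (2 * #T) := by linarith

lemma card_weak_le (hP : P.IsUniform k N d) (hd : 0 < d) {J : Finset ι} (hJ : J ⊆ P.index)
    {X : Finset V} (hX : #X ≤ 2 * #J) {j : Fin m} (hj : m * #(X ∩ P.reservoir j) ≤ #X) :
    m * #{v | d < 4 * N * degreeIn G (X ∩ P.reservoir j) v} ≤ 32 * k * Fintype.card V := by
  calc m * #{v | d < 4 * N * degreeIn G (X ∩ P.reservoir j) v}
      ≤ m * (2 * (4 * N) * #(X ∩ P.reservoir j)) :=
        Nat.mul_le_mul_left m (card_filter_lt_degreeIn_le hd hP.degree_le _)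
    _ = 8 * N * (m * #(X ∩ P.reservoir j)) := by ring
    _ ≤ 8 * N * (2 * #P.index) := Nat.mul_le_mul_left _
        (hj.trans (hX.trans (Nat.mul_le_mul_left 2 (Finset.card_le_card hJ))))
    _ = 16 * (N * #P.index) := by ring
    _ ≤ 16 * (2 * k * Fintype.card V) := Nat.mul_le_mul_left _ hP.card_index_le
    _ = 32 * k * Fintype.card V := by ring

lemma mul_card_le_of_few_weak (hP : P.IsUniform k N d) (hhm : 0 < h * m)
    (h256 : 256 * N * s ≤ h * m) {U T : Finset ι} {W : Finset V} (hU : #P.index ≤ s * #U)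
    (hT : h * #U ≤ h * #T + 2 * #W) (hW : m * #W ≤ 32 * k * Fintype.card V) :
    k * Fintype.card V ≤ 4 * N * s * #T := by
  have hkn : k * Fintype.card V ≤ 2 * N * (s * #U) :=
    hP.le_card_index.trans (Nat.mul_le_mul_left _ hU)
  refine Nat.le_of_mul_le_mul_left ?_ hhm
  have h₁ := Nat.mul_le_mul_left (h * m) hkn
  have h₂ := Nat.mul_le_mul_left (2 * N * s * m) hT
  have h₃ := Nat.mul_le_mul_left (4 * N * s) hW
  have h₄ := Nat.mul_le_mul_right (k * Fintype.card V) h256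
  linarith

end IsUniform

theorem IsPacking.exists_lt_card.{u, w} {α : Type u} {V : Type w} [Fintype V] [Nonempty V]
    [Nonempty α] {F : SimpleGraph α} {G : SimpleGraph V} {P : PathSystem G ι m ℓ}
    {k N d h s C : ℕ} (hFC : ForcesSubdivision.{u, w} F C) (hF : ∀ a, ∃ b, F.Adj a b)
    (hP : P.IsUniform k N d) (hk : 0 < k) (hN : 0 < N) (hs : 0 < s) (hhm : 0 < h * m)
    (hhℓ : 2 * h ≤ ℓ) (h256 : 256 * N * s ≤ h * m) (hCk : 4 * C * s ≤ k)
    (hd : 4 * N * (C + 1) ≤ d) {𝒞 : Set G.Subgraph} {J : Finset ι} {X : Finset V}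
    (h𝒞 : P.IsPacking F (ℓ - 2 * h) 𝒞 J X) (hJ : #P.index ≤ s * #(P.index \ J)) :
    ∃ 𝒞' J' X', P.IsPacking F (ℓ - 2 * h) 𝒞' J' X' ∧ #J < #J' := by
  have : NeZero m := ⟨(Nat.pos_of_mul_pos_left hhm).ne'⟩
  obtain ⟨j, hj⟩ := exists_card_mul_card_inter_le P.reservoir_disjoint X
  rw [Fintype.card_fin] at hj
  set W : Finset V := {v | d < 4 * N * degreeIn G (X ∩ P.reservoir j) v}
  obtain ⟨T, hTU, a, b, card_T, ha, hb, hab⟩ :=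
    exists_vertex_notMem (h := h) (by omega) (Finset.sdiff_subset : P.index \ J ⊆ _) W
  have hT : T ⊆ P.index := hTU.trans Finset.sdiff_subset
  have h_d : 0 < d := lt_of_lt_of_le (by positivity) hd
  have le_card_T : k * Fintype.card V ≤ 4 * N * s * #T := hP.mul_card_le_of_few_weak hhm h256 hJ
    card_T (hP.card_weak_le h_d h𝒞.subset_index h𝒞.card_le hj)
  have T_ne : T.Nonempty := Finset.card_pos.1 <| Nat.pos_of_ne_zero fun h => by
    have : 0 < k * Fintype.card V := Nat.mul_pos hk Fintype.card_pos
    simp [h] at le_card_T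
    omega
  have le_degree : ∀ x ∈ T, ∀ i < ℓ, P.vertex x i ∉ W →
      C + 1 ≤ degreeIn G (P.reservoir j \ X) (P.vertex x i) := fun x hx i hi hxW =>
    hP.le_degreeIn_sdiff hN hd (hT hx) hi (by simpa [W] using hxW)
  obtain ⟨H, J', hJ', X', hX', J'_ne, hH⟩ := exists_isPacking_singleton (c := ℓ - 2 * h) hFC hF
    Finset.sdiff_subset hT T_ne (fun x hx => by have := ha x hx; have := hb x hx; omega)
    (fun x hx => (hb x hx).2) (fun x hx => by have := ha x hx; have := hb x hx; omega)
    (fun x hx => le_degree x hx _ (by have := ha x hx; omega) (hab x hx).1)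
    (fun x hx => le_degree x hx _ (hb x hx).2 (hab x hx).2)
    (hP.mul_card_reservoir_sdiff_le hN hs hCk le_card_T j X)
  have hJJ' : Disjoint J J' := Finset.disjoint_sdiff.mono_right (hJ'.trans hTU)
  refine ⟨_, _, _, h𝒞.union hH hJJ' (Finset.disjoint_sdiff.mono_right hX'), ?_⟩
  rw [Finset.card_union_of_disjoint hJJ']
  exact Nat.lt_add_of_pos_right J'_ne.card_pos

theorem IsUniform.exists_isPacking.{u, w} {α : Type u} {V : Type w} [Fintype V] [Nonempty V]
    [Nonempty α] {F : SimpleGraph α} {G : SimpleGraph V} {P : PathSystem G ι m ℓ}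
    {k N d h s C : ℕ} (hP : P.IsUniform k N d) (hFC : ForcesSubdivision.{u, w} F C)
    (hF : ∀ a, ∃ b, F.Adj a b) (hk : 0 < k) (hN : 0 < N) (hs : 0 < s) (hhm : 0 < h * m)
    (hhℓ : 2 * h ≤ ℓ) (h256 : 256 * N * s ≤ h * m) (hCk : 4 * C * s ≤ k)
    (hd : 4 * N * (C + 1) ≤ d) :
    ∃ 𝒞 J X, P.IsPacking F (ℓ - 2 * h) 𝒞 J X ∧ s * #(P.index \ J) < #P.index := by
  obtain ⟨J, hJ, J_max⟩ := Finset.exists_max_image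
    {J ∈ P.index.powerset | ∃ 𝒞 X, P.IsPacking F (ℓ - 2 * h) 𝒞 J X} Finset.card
    ⟨∅, Finset.mem_filter.2 ⟨Finset.empty_mem_powerset _, ∅, ∅, isPacking_empty P F _⟩⟩
  obtain ⟨𝒞, X, h𝒞⟩ := (Finset.mem_filter.1 hJ).2
  refine ⟨𝒞, J, X, h𝒞, lt_of_not_ge fun hle => ?_⟩
  obtain ⟨𝒞', J', X', h𝒞', card_lt⟩ :=
    h𝒞.exists_lt_card hFC hF hP hk hN hs hhm hhℓ h256 hCk hd hle
  exact card_lt.not_ge (J_max J' (Finset.mem_filter.2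
    ⟨Finset.mem_powerset.2 h𝒞'.subset_index, 𝒞', X', h𝒞'⟩))

end PathSystem

end Greedy

section AlmostCover

lemma one_sub_mul_le_of_card_le {s k h n I J c : ℝ} (hs : 2 ≤ s) (hk : 0 < k) (hh : 0 ≤ h)
    (hn : 0 ≤ n) (hI : (1 - 1 / s) * (k * n) ≤ k * h * (s + 1) * I) (hJ : s * (I - J) ≤ I)
    (hc : J * (s * h - 2 * h) ≤ c) : (1 - 5 / (s + 1)) * n ≤ c := by
  have hI : (s - 1) * n ≤ s * (s + 1) * h * I := by
    refine le_of_mul_le_mul_left ?_ hk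
    calc k * ((s - 1) * n) = s * ((1 - 1 / s) * (k * n)) := by field_simp
      _ ≤ s * (k * h * (s + 1) * I) := by gcongr
      _ = k * (s * (s + 1) * h * I) := by ring
  have key : s ^ 2 * ((s - 4) * n) ≤ s ^ 2 * ((s + 1) * c) := by
    have h_s1 : 0 ≤ s - 1 := by linarith
    have h_s2 : 0 ≤ s - 2 := by linarith
    calc s ^ 2 * ((s - 4) * n) ≤ (s - 1) ^ 2 * (s - 2) * n := by nlinarith
      _ = (s - 2) * (s - 1) * ((s - 1) * n) := by ring
      _ ≤ (s - 2) * (s - 1) * (s * (s + 1) * h * I) := by gcongr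
      _ = (s - 2) * (s * (s + 1) * h) * ((s - 1) * I) := by ring
      _ ≤ (s - 2) * (s * (s + 1) * h) * (s * J) :=
          mul_le_mul_of_nonneg_left (by linarith) (by positivity)
      _ = s ^ 2 * ((s + 1) * (J * (s * h - 2 * h))) := by ring
      _ ≤ s ^ 2 * ((s + 1) * c) := by gcongr
  have := le_of_mul_le_mul_left key (by positivity)
  calc (1 - 5 / (s + 1)) * n = (s - 4) * n / (s + 1) := by field_simp; ring
    _ ≤ c := by rw [div_le_iff₀ (by linarith)]; linarith

lemma PathSystem.IsUniform.exists_packing.{u, w} {α : Type u} {V : Type w} [Fintype V]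
    [Nonempty V] [Nonempty α] {F : SimpleGraph α} {G : SimpleGraph V} {ι : Type*} {C s k h d : ℕ}
    {P : PathSystem G ι (k * h) (s * h)} (hP : P.IsUniform k (k * h * (s + 1)) d)
    (hFC : ForcesSubdivision.{u, w} F C) (hF : ∀ a, ∃ b, F.Adj a b) (hs : 2 ≤ s)
    (hh : 512 * s ^ 2 ≤ h) (hk : 4 * (C + 1) * s ≤ k) (hd : 4 * (k * h * (s + 1)) * (C + 1) ≤ d)
    (le_card_index : (1 - 1 / (s : ℝ)) * (k * Fintype.card V) ≤
      (k * h * (s + 1) : ℕ) * #P.index) :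
    ∃ 𝒞 : Set G.Subgraph, (∀ H ∈ 𝒞, F.IsSubdivision H.coe) ∧
      (𝒞.Pairwise fun H₁ H₂ => Disjoint H₁.verts H₂.verts) ∧
      (1 - 5 / ((s : ℝ) + 1)) * Fintype.card V ≤ ((⋃ H ∈ 𝒞, H.verts).ncard : ℝ) := by
  have h_s : 0 < s := by omega
  have h_k : 0 < k := lt_of_lt_of_le (by positivity) hk
  have h_h : 0 < h := lt_of_lt_of_le (by positivity) hh
  have h256 : 256 * (k * h * (s + 1)) * s ≤ h * (k * h) :=
    calc 256 * (k * h * (s + 1)) * s ≤ 256 * (k * h * (s + s)) * s := by gcongr; omega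
      _ = 512 * s ^ 2 * (k * h) := by ring
      _ ≤ h * (k * h) := Nat.mul_le_mul_right _ hh
  have hhℓ : 2 * h ≤ s * h := Nat.mul_le_mul_right h hs
  obtain ⟨𝒞, J, X, h𝒞, hJ⟩ := hP.exists_isPacking hFC hF h_k (by positivity) h_s (by positivity)
    hhℓ h256 (le_trans (by gcongr; omega) hk) hd
  have card_unused : (s : ℝ) * (#P.index - #J) ≤ #P.index := by
    rw [← Nat.cast_sub (Finset.card_le_card h𝒞.subset_index),
      ← Finset.card_sdiff_of_subset h𝒞.subset_index]
    exact_mod_cast hJ.le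
  have card_covered : (#J : ℝ) * (s * h - 2 * h) ≤ ((⋃ H ∈ 𝒞, H.verts).ncard : ℝ) := by
    have : ((#J * (s * h - 2 * h) : ℕ) : ℝ) ≤ _ := Nat.cast_le.2 h𝒞.mul_le_ncard
    rwa [Nat.cast_mul, Nat.cast_sub hhℓ, Nat.cast_mul, Nat.cast_mul, Nat.cast_two] at this
  push_cast at le_card_index
  exact ⟨𝒞, h𝒞.isSubdivision, h𝒞.pairwise_disjoint, one_sub_mul_le_of_card_le
    (by exact_mod_cast hs) (by exact_mod_cast h_k) (Nat.cast_nonneg h) (Nat.cast_nonneg _)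
    le_card_index card_unused card_covered⟩

lemma ncard_neighborSet [Fintype V] (v : V) :
    (G.neighborSet v).ncard = degreeIn G Finset.univ v := by
  rw [degreeIn, ← Set.ncard_coe_finset]
  congr 1
  ext w
  simp

theorem ForcesSubdivision.exists_packing.{u, w} {α : Type u} [Nonempty α] {F : SimpleGraph α}
    {C : ℕ} (hFC : ForcesSubdivision.{u, w} F C) (hF : ∀ a, ∃ b, F.Adj a b) {s : ℕ}
    (hs : 2 ≤ s) :
    ∃ γ : ℝ, 0 < γ ∧ ∃ d₀ : ℕ, ∀ d ≥ d₀, ∀ (V : Type w) [Fintype V] [Nonempty V]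
      (G : SimpleGraph V), (∀ v, (1 - γ) * d ≤ degreeIn G Finset.univ v) →
        (∀ v, degreeIn G Finset.univ v ≤ (1 + γ) * d) →
      ∃ 𝒞 : Set G.Subgraph, (∀ H ∈ 𝒞, F.IsSubdivision H.coe) ∧
        (𝒞.Pairwise fun H₁ H₂ => Disjoint H₁.verts H₂.verts) ∧
        (1 - 5 / ((s : ℝ) + 1)) * Fintype.card V ≤ ((⋃ H ∈ 𝒞, H.verts).ncard : ℝ) := by
  obtain ⟨h, hh⟩ : ∃ h, h = 512 * s ^ 2 := ⟨_, rfl⟩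
  obtain ⟨k, hk⟩ : ∃ k, k = 4 * (C + 1) * s := ⟨_, rfl⟩
  have h_s : 0 < s := by omega
  have h_h : 0 < h := hh ▸ by positivity
  have h_k : 0 < k := hk ▸ by positivity
  set N : ℕ := k * h * (s + 1)
  have h_N : (0 : ℝ) < N := by exact_mod_cast (by positivity : 0 < k * h * (s + 1))
  set γ : ℝ := 1 / s / (11 * N ^ 2)
  have h_γ : 0 < γ := by positivity
  refine ⟨γ, h_γ, ⌈2 * (N : ℝ) ^ 2 / γ ^ 3⌉₊ + 4 * N * (C + 1),
    fun d hd V _ _ G le_degree degree_le => ?_⟩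
  have : NeZero (s * h) := ⟨by positivity⟩
  have hdN : 2 * (N : ℝ) ^ 2 ≤ γ ^ 3 * d :=
    (div_le_iff₀' (by positivity)).1 (Nat.ceil_le.1 ((Nat.le_add_right _ _).trans hd))
  obtain ⟨P, hP, le_card_index⟩ := exists_pathSystem_isUniform (m := k * h) (k := k) (ℓ := s * h)
    (N := N) (by simp only [N]; ring) h_k h_γ
    (one_div_le_one_div_of_le two_pos (by exact_mod_cast hs))
    (mul_div_cancel₀ _ (by positivity)).le hdN le_degree degree_le
  exact hP.exists_packing hFC hF hs hh.ge hk.ge ((Nat.le_add_left _ _).trans hd) le_card_index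

end AlmostCover

end SubdivisionPacking

/-- Lemma 3.1: for a fixed graph `F` with no isolated vertices and at least one edge, and any
`ν > 0`, there are `γ > 0` and `d₀` such that for all `n ≥ d ≥ d₀`, every `n`-vertex graph all
of whose degrees are `(1 ± γ) d` contains a collection of pairwise vertex-disjoint
`F`-subdivisions covering at least `(1 - ν) n` vertices. -/
theorem stmt_1 {α : Type*} [Fintype α] (F : SimpleGraph α)
    (hFiso : ∀ a : α, ∃ b : α, F.Adj a b) (hFe : ∃ a b : α, F.Adj a b)
    (ν : ℝ) (hν : 0 < ν) :
    ∃ (γ : ℝ) (d₀ : ℕ), 0 < γ ∧ ∀ n d : ℕ, d₀ ≤ d → d ≤ n →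
      ∀ (V : Type*) [Fintype V] (G : SimpleGraph V), Fintype.card V = n →
        (∀ v : V, (1 - γ) * d ≤ ((G.neighborSet v).ncard : ℝ) ∧
          ((G.neighborSet v).ncard : ℝ) ≤ (1 + γ) * d) →
        ∃ 𝒞 : Set G.Subgraph,
          (∀ H ∈ 𝒞, F.IsSubdivision H.coe) ∧
          (𝒞.Pairwise fun H₁ H₂ => Disjoint H₁.verts H₂.verts) ∧
          (1 - ν) * n ≤ ((⋃ H ∈ 𝒞, H.verts).ncard : ℝ) := by
  have : Nonempty α := ⟨hFe.choose⟩
  obtain ⟨C, hFC⟩ := SubdivisionPacking.exists_forcesSubdivision F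
  set s : ℕ := ⌈5 / ν⌉₊ + 2
  have hsν : 5 / ((s : ℝ) + 1) ≤ ν := by
    have := (div_le_iff₀ hν).1 (Nat.le_ceil (5 / ν))
    rw [div_le_iff₀ (by positivity)]
    push_cast [s]
    linarith
  obtain ⟨γ, hγ, d₀, exists_packing⟩ := hFC.exists_packing hFiso (s := s) (Nat.le_add_left 2 _)
  refine ⟨γ, d₀ + 1, hγ, fun n d hd hdn V _ G hVn hdeg => ?_⟩
  have : Nonempty V := Fintype.card_pos_iff.1 (by omega)
  simp only [SubdivisionPacking.ncard_neighborSet] at hdeg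
  obtain ⟨𝒞, h_subdivision, h_disjoint, h_cover⟩ := exists_packing d (by omega) V G
    (fun v => (hdeg v).1) fun v => (hdeg v).2
  refine ⟨𝒞, h_subdivision, h_disjoint, le_trans ?_ h_cover⟩
  rw [hVn]
  gcongr
end

section
/- For all γ, p with 0 < γ, p ≤ 1/2, there exists d₀ such that the following holds for all d ≥ d₀. Let m ∈ ℕ and let p₁, …, p_m ≥ p be reals with p₁ + ⋯ + p_m = 1. Let G be a graph with maximum degree Δ(G) ≤ 2d containing non-empty vertex sets A and V such that d_G(v, A) ≥ (1 − γ)d for each v ∈ V. Then there is a partition A = A₁ ∪ ⋯ ∪ A_m such that: (A1) for each v ∈ V and i ∈ [m], d_G(v, A_i) ≥ (1 − 2γ)p_i d; and (A2) for each i ∈ [m], (1 − γ)p_i|A| ≤ |A_i| ≤ (1 + γ)p_i|A|. Moreover, if additionally d_G(v, A) ≤ (1 + γ)d for each v ∈ V, then the partition can be chosen so that also (A3) for each v ∈ V and i ∈ [m], d_G(v, A_i) ≤ (1 + 2γ)p_i d. -/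
open SimpleGraph

/-!
Colour the vertices independently, using colour `i` with probability `r i`. By Hoeffding's
inequality a given set of about `d` vertices gets a wrong share of some colour with probability
exponentially small in `d`, and each set `N(v) ∩ A` meets at most `(2d)²` of the others, so the
local lemma yields a colouring for which all of them are balanced. The set `A` itself may meet
far too many of these sets, so it is cut into blocks of about `d` vertices each, which are required
to be balanced too: every vertex lies in a single block, hence the dependency degree remains
quadratic in `d`, and `A` inherits the balance of its blocks.
-/

open MeasureTheory ProbabilityTheory Finset

section LocalLemma

variable {Ω ι : Type*} {E : ι → Set Ω}

/-- The event that none of the events `E k` with `k ∈ T` occurs, which the local lemma shows to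
have positive probability. -/
def avoidSet (E : ι → Set Ω) (T : Finset ι) : Set Ω := ⋂ k ∈ T, (E k)ᶜ

lemma avoidSet_anti {S T : Finset ι} (h : S ⊆ T) : avoidSet E T ⊆ avoidSet E S :=
  Set.biInter_subset_biInter_left h

variable [MeasurableSpace Ω] {μ : Measure Ω} {x : ι → ℝ} {Γ : ι → Finset ι}

lemma measureReal_avoidSet_insert [IsFiniteMeasure μ] [DecidableEq ι]
    (hE : ∀ k, MeasurableSet (E k)) (k : ι) (T : Finset ι) :
    μ.real (avoidSet E (insert k T)) = μ.real (avoidSet E T) - μ.real (E k ∩ avoidSet E T) := by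
  have hsplit := measureReal_inter_add_sdiff (μ := μ) (s := avoidSet E T) (hE k)
  have hinsert : avoidSet E (insert k T) = avoidSet E T \ E k := by
    rw [avoidSet, set_biInter_insert, Set.inter_comm, ← Set.sdiff_eq, avoidSet]
  rw [hinsert, Set.inter_comm]
  linarith

lemma prod_one_sub_mul_measureReal_avoidSet_le [IsFiniteMeasure μ] [DecidableEq ι]
    (hE : ∀ k, MeasurableSet (E k)) (hx : ∀ k, x k ≤ 1) {S T : Finset ι} (hST : Disjoint S T)
    (h : ∀ U ⊂ S ∪ T, ∀ k ∉ U, μ.real (E k ∩ avoidSet E U) ≤ x k * μ.real (avoidSet E U)) :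
    (∏ k ∈ S, (1 - x k)) * μ.real (avoidSet E T) ≤ μ.real (avoidSet E (S ∪ T)) := by
  induction S using Finset.induction_on with
  | empty => simp
  | insert a S ha ih =>
    rw [disjoint_insert_left] at hST
    rw [insert_union] at h ⊢
    have haST : a ∉ S ∪ T := by simp [ha, hST.1]
    have hprev := ih hST.2 fun U hU => h U (hU.trans (ssubset_insert haST))
    calc (∏ k ∈ insert a S, (1 - x k)) * μ.real (avoidSet E T)
        = (1 - x a) * ((∏ k ∈ S, (1 - x k)) * μ.real (avoidSet E T)) := by
          rw [prod_insert ha, mul_assoc]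
      _ ≤ (1 - x a) * μ.real (avoidSet E (S ∪ T)) := by
          gcongr
          exact sub_nonneg.2 (hx a)
      _ ≤ μ.real (avoidSet E (insert a (S ∪ T))) := by
          rw [measureReal_avoidSet_insert hE]
          linarith [h _ (ssubset_insert haST) a haST]

/-- In terms of conditional probabilities, `ℙ(E j | avoidSet E T) ≤ x j`; stated multiplicatively so
that `avoidSet E T` may be null. -/
lemma measureReal_inter_avoidSet_le [IsFiniteMeasure μ]
    (hE : ∀ k, MeasurableSet (E k)) (hx₀ : ∀ k, 0 ≤ x k) (hx₁ : ∀ k, x k ≤ 1)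
    (h : ∀ j T, Disjoint T (Γ j) → j ∉ T →
      μ.real (E j ∩ avoidSet E T) ≤ (x j * ∏ k ∈ Γ j, (1 - x k)) * μ.real (avoidSet E T))
    (T : Finset ι) {j : ι} (hj : j ∉ T) :
    μ.real (E j ∩ avoidSet E T) ≤ x j * μ.real (avoidSet E T) := by
  classical
  induction T using Finset.strongInduction generalizing j with
  | H T ih =>
    have hfar : Disjoint (T \ Γ j) (Γ j) := sdiff_disjoint
    have hdisj : Disjoint (T ∩ Γ j) (T \ Γ j) := (disjoint_sdiff_inter T (Γ j)).symm
    have hunion : T ∩ Γ j ∪ T \ Γ j = T := by rw [union_comm, sdiff_union_inter]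
    have hprod : ∏ k ∈ Γ j, (1 - x k) ≤ ∏ k ∈ T ∩ Γ j, (1 - x k) :=
      prod_le_prod_of_subset_of_le_one inter_subset_right
        (fun k _ => sub_nonneg.2 (hx₁ k)) (fun k _ _ => sub_le_self _ (hx₀ k))
    calc μ.real (E j ∩ avoidSet E T)
        ≤ μ.real (E j ∩ avoidSet E (T \ Γ j)) :=
          measureReal_mono (Set.inter_subset_inter_right _ (avoidSet_anti sdiff_subset))
      _ ≤ (x j * ∏ k ∈ Γ j, (1 - x k)) * μ.real (avoidSet E (T \ Γ j)) :=
          h j _ hfar fun hmem => hj (mem_sdiff.1 hmem).1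
      _ ≤ x j * ((∏ k ∈ T ∩ Γ j, (1 - x k)) * μ.real (avoidSet E (T \ Γ j))) := by
          rw [mul_assoc]
          gcongr
          exact hx₀ j
      _ ≤ x j * μ.real (avoidSet E (T ∩ Γ j ∪ T \ Γ j)) := by
          refine mul_le_mul_of_nonneg_left ?_ (hx₀ j)
          refine prod_one_sub_mul_measureReal_avoidSet_le hE hx₁ hdisj fun U hU k hk => ?_
          exact ih U (hunion ▸ hU) hk
      _ = x j * μ.real (avoidSet E T) := by rw [hunion]

theorem lovasz_local_lemma [IsProbabilityMeasure μ]
    (hE : ∀ k, MeasurableSet (E k)) (hx₀ : ∀ k, 0 ≤ x k) (hx₁ : ∀ k, x k ≤ 1)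
    (h : ∀ j T, Disjoint T (Γ j) → j ∉ T →
      μ.real (E j ∩ avoidSet E T) ≤ (x j * ∏ k ∈ Γ j, (1 - x k)) * μ.real (avoidSet E T))
    (T : Finset ι) : ∏ k ∈ T, (1 - x k) ≤ μ.real (avoidSet E T) := by
  classical
  simpa [avoidSet] using
    prod_one_sub_mul_measureReal_avoidSet_le hE hx₁ (disjoint_empty_right T)
      fun U _ _ hk => measureReal_inter_avoidSet_le hE hx₀ hx₁ h U hk

theorem symmetric_lovasz_local_lemma [IsProbabilityMeasure μ]
    (hE : ∀ k, MeasurableSet (E k)) {q : ℝ} {D : ℕ} (hΓ : ∀ j, #(Γ j) ≤ D)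
    (hq : Real.exp 1 * q * (D + 1) ≤ 1)
    (h : ∀ j T, Disjoint T (Γ j) → j ∉ T →
      μ.real (E j ∩ avoidSet E T) ≤ q * μ.real (avoidSet E T))
    (T : Finset ι) : 0 < μ.real (avoidSet E T) := by
  -- The weight `x = 1 - exp (-t)` satisfies `q ≤ x * (1 - x) ^ D`, also when `D = 0`.
  set t : ℝ := 1 / (D + 1) with ht
  set y := Real.exp (-t) with hy
  have hy₀ : 0 < y := Real.exp_pos _
  have hy₁ : y ≤ 1 := Real.exp_le_one_iff.2 (by rw [ht, Left.neg_nonpos_iff]; positivity)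
  have hpow : y * y ^ D = Real.exp (-1) := by
    rw [← pow_succ', hy, ← Real.exp_nat_mul, ht]
    congr 1
    push_cast
    field_simp
  have hqy : q ≤ (1 - y) * y ^ D := by
    calc q ≤ t * Real.exp (-1) := by
          rw [ht, Real.exp_neg]
          field_simp
          linarith
      _ ≤ (Real.exp t - 1) * Real.exp (-1) := by
          gcongr
          linarith [Real.add_one_le_exp t]
      _ = (1 - y) * y ^ D := by
          have hty : Real.exp t * y = 1 := by rw [hy, ← Real.exp_add, add_neg_cancel, Real.exp_zero]
          linear_combination (-(Real.exp t - 1)) * hpow + y ^ D * hty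
  have hprob : ∏ k ∈ T, (1 - (1 - y)) ≤ μ.real (avoidSet E T) := by
    refine lovasz_local_lemma (x := fun _ => 1 - y) (Γ := Γ) hE (fun _ => by linarith)
      (fun _ => by linarith) (fun j T hT hj => (h j T hT hj).trans ?_) T
    gcongr
    rw [prod_const, sub_sub_cancel]
    exact hqy.trans (mul_le_mul_of_nonneg_left (pow_le_pow_of_le_one hy₀.le hy₁ (hΓ j))
      (by linarith))
  exact (prod_pos fun _ _ => by linarith).trans_le hprob

theorem exists_forall_notMem_of_iIndep [Fintype ι] {α : Type*} [DecidableEq α]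
    {m : α → MeasurableSpace Ω} (hm : ∀ a, m a ≤ ‹MeasurableSpace Ω›) (hindep : iIndep m μ)
    (s : ι → Finset α) (hE : ∀ j, MeasurableSet[⨆ a ∈ s j, m a] (E j))
    {q : ℝ} (hEq : ∀ j, μ.real (E j) ≤ q)
    {D : ℕ} (hD : ∀ j, #{k | ¬Disjoint (s j) (s k)} ≤ D) (hq : Real.exp 1 * q * (D + 1) ≤ 1) :
    ∃ ω, ∀ j, ω ∉ E j := by
  have : IsProbabilityMeasure μ := hindep.isProbabilityMeasure
  have hE' : ∀ j, MeasurableSet (E j) := fun j => iSup₂_le (fun a _ => hm a) _ (hE j)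
  have hdep : ∀ j (T : Finset ι), Disjoint T (univ.filter fun k => ¬Disjoint (s j) (s k)) → j ∉ T →
      μ.real (E j ∩ avoidSet E T) ≤ q * μ.real (avoidSet E T) := by
    intro j T hT _
    have havoid : MeasurableSet[⨆ a ∈ (↑(T.biUnion s) : Set α), m a] (avoidSet E T) := by
      refine T.measurableSet_biInter fun k hk => MeasurableSet.compl ?_
      have hsub : s k ⊆ T.biUnion s := subset_biUnion_of_mem s hk
      have hle : ⨆ a ∈ s k, m a ≤ ⨆ a ∈ (↑(T.biUnion s) : Set α), m a :=
        biSup_mono fun a ha => hsub ha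
      exact hle _ (hE k)
    have hdisj : Disjoint (s j : Set α) ↑(T.biUnion s) := by
      rw [disjoint_coe, disjoint_biUnion_right]
      intro k hk
      simpa using Finset.disjoint_left.1 hT hk
    rw [measureReal_def, (Indep_iff _ _ _).1 (indep_iSup_of_disjoint hm hindep hdisj) _ _ (hE j)
      havoid, ENNReal.toReal_mul]
    exact mul_le_mul_of_nonneg_right (hEq j) measureReal_nonneg
  have hpos := symmetric_lovasz_local_lemma hE' hD hq hdep univ
  obtain ⟨ω, hω⟩ : (avoidSet E univ).Nonempty := nonempty_of_measureReal_ne_zero hpos.ne'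
  exact ⟨ω, by simpa [avoidSet] using hω⟩

end LocalLemma

section Concentration

lemma measureReal_le_abs_le_of_hasSubgaussianMGF {Ω : Type*} [MeasurableSpace Ω] {μ : Measure Ω}
    [IsFiniteMeasure μ]
    {X : Ω → ℝ} {c : NNReal} (hX : HasSubgaussianMGF X c μ) {ε : ℝ} (hε : 0 ≤ ε) :
    μ.real {ω | ε ≤ |X ω|} ≤ 2 * Real.exp (-ε ^ 2 / (2 * c)) := by
  have hsplit : {ω | ε ≤ |X ω|} = {ω | ε ≤ X ω} ∪ {ω | ε ≤ (-X) ω} := by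
    ext ω
    exact le_abs (α := ℝ)
  rw [hsplit, two_mul]
  exact (measureReal_union_le _ _).trans
    (add_le_add (hX.measure_ge_le hε) (hX.neg.measure_ge_le hε))

variable {α κ : Type*} [DecidableEq κ]

/-- The colouring `c` gives every colour `i` a share of the set `S` which differs from the
prescribed share `r i` by at most `ε`. The inequality is multiplied by `#S`, so that every colouring
is balanced on `∅`. -/
def IsBalanced (r : κ → ℝ) (ε : ℝ) (c : α → κ) (S : Finset α) : Prop :=
  ∀ i, |(#{a ∈ S | c a = i} : ℝ) - r i * #S| ≤ ε * #S

lemma IsBalanced.of_finpartition [DecidableEq α] {r : κ → ℝ} {ε : ℝ} {c : α → κ} {S : Finset α}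
    (P : Finpartition S) (h : ∀ T ∈ P.parts, IsBalanced r ε c T) : IsBalanced r ε c S := by
  intro i
  have hcount : #{a ∈ S | c a = i} = ∑ T ∈ P.parts, #{a ∈ T | c a = i} := by
    have hdisj : (P.parts : Set (Finset α)).PairwiseDisjoint fun T => {a ∈ T | c a = i} :=
      fun T hT U hU hTU => disjoint_filter_filter (P.disjoint hT hU hTU)
    rw [← card_biUnion hdisj]
    conv_lhs => rw [← P.biUnion_parts, filter_biUnion]
    rfl
  rw [hcount, ← P.sum_card_parts]
  push_cast
  rw [mul_sum, mul_sum, ← sum_sub_distrib]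
  exact (abs_sum_le_sum_abs _ _).trans (sum_le_sum fun T hT => h T hT i)

variable [MeasurableSpace κ] [MeasurableSingletonClass κ]

lemma measurable_ite_eq (i : κ) : Measurable fun k : κ => if k = i then (1 : ℝ) else 0 :=
  Measurable.ite (measurableSet_singleton i) measurable_const measurable_const

lemma measurableSet_isBalanced [Countable κ] {Ω : Type*} {mΩ : MeasurableSpace Ω} (r : κ → ℝ)
    (ε : ℝ) {S : Finset α} {X : α → Ω → κ} (hX : ∀ a ∈ S, Measurable (X a)) :
    MeasurableSet {ω | IsBalanced r ε (fun a => X a ω) S} := by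
  simp only [IsBalanced, natCast_card_filter, Set.ofPred_forall]
  refine MeasurableSet.iInter fun i => measurableSet_le (Measurable.abs (Measurable.sub_const
    (Finset.measurable_fun_sum _ fun a ha => ?_) _)) measurable_const
  exact (measurable_ite_eq i).comp (hX a ha)

variable [Fintype α] (ν : Measure κ) [IsProbabilityMeasure ν]

lemma hasSubgaussianMGF_colour_indicator (i : κ) (a : α) :
    HasSubgaussianMGF (fun c : α → κ => (if c a = i then (1 : ℝ) else 0) - ν.real {i})
      (1 / 4) (Measure.pi fun _ => ν) := by
  have hindicator : (fun k : κ => if k = i then (1 : ℝ) else 0) = Set.indicator {i} 1 := by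
    ext k
    simp [Set.indicator_apply]
  have hmean : ∫ k, (if k = i then (1 : ℝ) else 0) ∂ν = ν.real {i} := by
    rw [hindicator, integral_indicator_one (measurableSet_singleton i)]
  have hsub := hasSubgaussianMGF_of_mem_Icc (μ := ν) (a := 0) (b := 1)
    (measurable_ite_eq i).aemeasurable (.of_forall fun k => by split_ifs <;> simp)
  have hmap : (Measure.pi fun _ : α => ν).map (fun c => c a) = ν :=
    (measurePreserving_eval (fun _ : α => ν) a).map_eq
  refine HasSubgaussianMGF.of_map (Y := fun c : α → κ => c a)
    (X := fun k => (if k = i then (1 : ℝ) else 0) - ν.real {i})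
    (measurable_pi_apply a).aemeasurable ?_
  rw [hmap]
  convert hsub using 2
  · rw [hmean]
  · norm_num

lemma measureReal_pi_le_abs_card_filter_sub_le {ε : ℝ} (hε : 0 ≤ ε) (i : κ) (S : Finset α) :
    (Measure.pi fun _ : α => ν).real
        {c | ε * #S ≤ |(#{a ∈ S | c a = i} : ℝ) - ν.real {i} * #S|} ≤
      2 * Real.exp (-(2 * ε ^ 2 * #S)) := by
  have hindep : iIndepFun (fun a (c : α → κ) => (if c a = i then (1 : ℝ) else 0) - ν.real {i})
      (Measure.pi fun _ => ν) :=
    iIndepFun_pi (X := fun _ k => (if k = i then (1 : ℝ) else 0) - ν.real {i}) fun _ =>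
      ((measurable_ite_eq i).sub_const _).aemeasurable
  have htail := measureReal_le_abs_le_of_hasSubgaussianMGF
    (HasSubgaussianMGF.sum_of_iIndepFun hindep fun a (_ : a ∈ S) =>
      hasSubgaussianMGF_colour_indicator ν i a) (show 0 ≤ ε * #S by positivity)
  convert htail using 4
  · rw [sum_sub_distrib, ← natCast_card_filter, sum_const, nsmul_eq_mul, mul_comm (#S : ℝ)]
  · rcases S.eq_empty_or_nonempty with rfl | hS
    · simp
    · have : (0 : ℝ) < #S := by exact_mod_cast hS.card_pos
      push_cast [sum_const, nsmul_eq_mul]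
      field_simp
      ring

lemma measureReal_pi_not_isBalanced_le [Fintype κ] {ε : ℝ} (hε : 0 ≤ ε) (S : Finset α) :
    (Measure.pi fun _ : α => ν).real {c | ¬IsBalanced (fun i => ν.real {i}) ε c S} ≤
      Fintype.card κ * (2 * Real.exp (-(2 * ε ^ 2 * #S))) := by
  have hsub : {c : α → κ | ¬IsBalanced (fun i => ν.real {i}) ε c S} ⊆
      ⋃ i, {c | ε * #S ≤ |(#{a ∈ S | c a = i} : ℝ) - ν.real {i} * #S|} := by
    intro c hc
    simp only [IsBalanced, Set.mem_ofPred_eq, not_forall, not_le] at hc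
    exact Set.mem_iUnion.2 (hc.imp fun i hi => hi.le)
  calc (Measure.pi fun _ : α => ν).real {c | ¬IsBalanced (fun i => ν.real {i}) ε c S}
      ≤ ∑ i, (Measure.pi fun _ : α => ν).real
          {c | ε * #S ≤ |(#{a ∈ S | c a = i} : ℝ) - ν.real {i} * #S|} :=
        (measureReal_mono hsub).trans (measureReal_iUnion_fintype_le _)
    _ ≤ ∑ _i : κ, 2 * Real.exp (-(2 * ε ^ 2 * #S)) :=
        sum_le_sum fun i _ => measureReal_pi_le_abs_card_filter_sub_le ν hε i S
    _ = Fintype.card κ * (2 * Real.exp (-(2 * ε ^ 2 * #S))) := by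
        rw [sum_const, nsmul_eq_mul, card_univ]

end Concentration

section Colouring

variable {α κ ι : Type*}

lemma exists_measure_real_singleton_eq [Fintype κ] [MeasurableSpace κ] [MeasurableSingletonClass κ]
    {r : κ → ℝ} (hr : ∀ i, 0 ≤ r i) (hsum : ∑ i, r i = 1) :
    ∃ ν : Measure κ, IsProbabilityMeasure ν ∧ ∀ i, ν.real {i} = r i := by
  have hmass : ∑ i, ENNReal.ofReal (r i) = 1 := by
    rw [← ENNReal.ofReal_sum_of_nonneg fun i _ => hr i, hsum, ENNReal.ofReal_one]
  refine ⟨(PMF.ofFintype _ hmass).toMeasure, inferInstance, fun i => ?_⟩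
  rw [measureReal_def, PMF.toMeasure_apply_singleton _ _ (measurableSet_singleton i),
    PMF.ofFintype_apply, ENNReal.toReal_ofReal (hr i)]

lemma card_not_disjoint_le [DecidableEq α] [Fintype ι] {s : ι → Finset α} {N Δ : ℕ}
    (hN : ∀ j, #(s j) ≤ N) (hΔ : ∀ a, #{j | a ∈ s j} ≤ Δ) (j : ι) :
    #{k | ¬Disjoint (s j) (s k)} ≤ N * Δ := by
  classical
  have hsub : univ.filter (fun k => ¬Disjoint (s j) (s k)) ⊆
      (s j).biUnion fun a => {k | a ∈ s k} := by
    intro k hk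
    simpa [not_disjoint_iff] using hk
  calc #{k | ¬Disjoint (s j) (s k)} ≤ #(s j) * Δ :=
        (card_le_card hsub).trans (card_biUnion_le_card_mul _ _ _ fun a _ => hΔ a)
    _ ≤ N * Δ := Nat.mul_le_mul_right _ (hN j)

variable [DecidableEq κ]

theorem exists_forall_isBalanced [DecidableEq α] [Finite α] [Fintype κ] [Fintype ι]
    {r : κ → ℝ} (hr : ∀ i, 0 ≤ r i) (hsum : ∑ i, r i = 1) {ε : ℝ} (hε : 0 ≤ ε) {s : ι → Finset α}
    {n N Δ : ℕ} (hn : ∀ j, n ≤ #(s j)) (hN : ∀ j, #(s j) ≤ N) (hΔ : ∀ a, #{j | a ∈ s j} ≤ Δ)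
    (h : Real.exp 1 * (Fintype.card κ * (2 * Real.exp (-(2 * ε ^ 2 * n)))) * (N * Δ + 1) ≤ 1) :
    ∃ c : α → κ, ∀ j, IsBalanced r ε c (s j) := by
  cases nonempty_fintype α
  let _ : MeasurableSpace κ := ⊤
  obtain ⟨ν, _, hν⟩ := exists_measure_real_singleton_eq hr hsum
  obtain rfl : (fun i => ν.real {i}) = r := funext hν
  have hindep := (iIndepFun_iff_iIndep _ _ _).1
    (iIndepFun_pi (μ := fun _ : α => ν) (X := fun _ k => k) fun _ => aemeasurable_id)
  have hfail : ∀ j, (Measure.pi fun _ : α => ν).real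
      {c | ¬IsBalanced (fun i => ν.real {i}) ε c (s j)} ≤
        Fintype.card κ * (2 * Real.exp (-(2 * ε ^ 2 * n))) := by
    intro j
    refine (measureReal_pi_not_isBalanced_le ν hε (s j)).trans ?_
    gcongr
    exact hn j
  obtain ⟨c, hc⟩ := exists_forall_notMem_of_iIndep
    (fun a => (measurable_pi_apply a).comap_le) hindep s
    (fun j => (measurableSet_isBalanced (mΩ := ⨆ a ∈ s j, _) _ ε fun a ha =>
      (comap_measurable fun c : α → κ => c a).mono
        (le_iSup₂ (f := fun a (_ : a ∈ s j) => MeasurableSpace.comap (fun c : α → κ => c a) ⊤) a ha)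
        le_rfl).compl)
    hfail (card_not_disjoint_le hN hΔ) (by exact_mod_cast h)
  exact ⟨c, fun j => not_not.1 (hc j)⟩

lemma IsBalanced.ncard_inter_preimage_mem_Icc {r : κ → ℝ} {ε η : ℝ} {c : α → κ}
    {S : Set α} [Fintype S] (h : IsBalanced r ε c S.toFinset) {i : κ} (hη : ε ≤ η * r i) :
    ((S ∩ c ⁻¹' {i}).ncard : ℝ) ∈
      Set.Icc ((1 - η) * r i * S.ncard) ((1 + η) * r i * S.ncard) := by
  have hcount : (S ∩ c ⁻¹' {i}).ncard = #{a ∈ S.toFinset | c a = i} := by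
    rw [← Set.ncard_coe_finset]
    congr 1
    ext a
    simp
  have hdev := abs_le.1 ((h i).trans (mul_le_mul_of_nonneg_right hη (Nat.cast_nonneg _)))
  rw [hcount, Set.ncard_eq_toFinset_card']
  constructor <;> linarith [hdev.1, hdev.2]

variable [DecidableEq α]

lemma exists_finpartition_card_mem_Icc (B : Finset α) {k : ℕ} (hk : 0 < k) (hkB : k ≤ #B) :
    ∃ P : Finpartition B, ∀ S ∈ P.parts, #S ∈ Set.Icc k (2 * k) := by
  have hblocks : 0 < #B / k := Nat.div_pos hkB hk
  obtain ⟨P, hP, hcard⟩ := Finpartition.exists_equipartition_card_eq B hblocks.ne'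
    (Nat.div_le_self _ _)
  refine ⟨P, fun S hS => ⟨?_, ?_⟩⟩
  · refine le_trans ?_ (hP.average_le_card_part hS)
    rw [hcard, Nat.le_div_iff_mul_le hblocks]
    exact Nat.mul_div_le _ _
  · refine (hP.card_part_le_average_add_one hS).trans (Nat.succ_le_of_lt ?_)
    rw [hcard, Nat.div_lt_iff_lt_mul hblocks]
    have hlt : #B < k * (#B / k + 1) := Nat.lt_mul_div_succ _ hk
    nlinarith

/-- A large set `B` may meet too many of the sets `s j` for the local lemma; it is balanced because
its blocks in a partition into small sets are. -/
theorem exists_forall_isBalanced_and_isBalanced [Finite α] [Fintype κ] [Fintype ι] {r : κ → ℝ}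
    (hr : ∀ i, 0 ≤ r i) (hsum : ∑ i, r i = 1) {ε : ℝ} (hε : 0 ≤ ε) {s : ι → Finset α}
    {B : Finset α} {n N Δ : ℕ} (hn₀ : 0 < n) (hnN : 2 * n ≤ N)
    (hn : ∀ j, n ≤ #(s j)) (hnB : n ≤ #B) (hN : ∀ j, #(s j) ≤ N) (hΔ : ∀ a, #{j | a ∈ s j} ≤ Δ)
    (h : Real.exp 1 * (Fintype.card κ * (2 * Real.exp (-(2 * ε ^ 2 * n)))) *
      (N * (Δ + 1) + 1) ≤ 1) :
    ∃ c : α → κ, (∀ j, IsBalanced r ε c (s j)) ∧ IsBalanced r ε c B := by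
  obtain ⟨P, hP⟩ := exists_finpartition_card_mem_Icc B hn₀ hnB
  let t : ι ⊕ P.parts → Finset α := Sum.elim s Subtype.val
  have hblock : ∀ a, #{S : P.parts | a ∈ S.1} ≤ 1 := by
    refine fun a => card_le_one.2 fun S hS T hT => Subtype.ext ?_
    exact P.eq_of_mem_parts S.2 T.2 (mem_filter.1 hS).2 (mem_filter.1 hT).2
  have hdeg : ∀ a, #{j | a ∈ t j} ≤ Δ + 1 := by
    intro a
    have hsplit : #{j | a ∈ t j} = #{j | a ∈ s j} + #{S : P.parts | a ∈ S.1} := by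
      simp only [card_filter, Fintype.sum_sum_type, t, Sum.elim_inl, Sum.elim_inr]
      rfl
    exact hsplit.trans_le (add_le_add (hΔ a) (hblock a))
  obtain ⟨c, hc⟩ := exists_forall_isBalanced hr hsum hε (s := t)
    (Sum.rec hn fun S => (hP S S.2).1) (Sum.rec hN fun S => (hP S S.2).2.trans hnN) hdeg
    (by exact_mod_cast h)
  exact ⟨c, fun j => hc (.inl j), .of_finpartition P fun S hS => hc (.inr ⟨S, hS⟩)⟩

end Colouring

section Graph

variable {V κ : Type*} [Fintype κ]

open scoped Classical in
theorem exists_isBalanced_neighborSet_inter [Fintype V] [DecidableEq κ] (G : SimpleGraph V)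
    {r : κ → ℝ} (hr : ∀ i, 0 ≤ r i) (hsum : ∑ i, r i = 1) {ε : ℝ} (hε : 0 ≤ ε) {n Δ : ℕ}
    (hn₀ : 0 < n) (hnΔ : 2 * n ≤ Δ) (hΔ : ∀ v, (G.neighborSet v).ncard ≤ Δ) {A W : Set V}
    (hW : W.Nonempty) (hn : ∀ v ∈ W, n ≤ (G.neighborSet v ∩ A).ncard)
    (h : Real.exp 1 * (Fintype.card κ * (2 * Real.exp (-(2 * ε ^ 2 * n)))) *
      (Δ * (Δ + 1) + 1) ≤ 1) :
    ∃ c : V → κ, (∀ v ∈ W, IsBalanced r ε c (G.neighborSet v ∩ A).toFinset) ∧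
      IsBalanced r ε c A.toFinset := by
  let s : W → Finset V := fun v => (G.neighborSet v ∩ A).toFinset
  have hcard : ∀ v : W, #(s v) = (G.neighborSet v ∩ A).ncard := fun v =>
    (Set.ncard_eq_toFinset_card' _).symm
  have hlarge : ∀ v, n ≤ #(s v) := fun v => (hn v v.2).trans_eq (hcard v).symm
  have hsmall : ∀ v, #(s v) ≤ Δ := fun v =>
    (hcard v).trans_le ((Set.ncard_le_ncard Set.inter_subset_left).trans (hΔ v))
  have hdeg : ∀ a, #{v | a ∈ s v} ≤ Δ := by
    intro a
    rw [← card_map (Function.Embedding.subtype _), ← Set.ncard_coe_finset]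
    refine (Set.ncard_le_ncard fun v hv => ?_).trans (hΔ a)
    obtain ⟨⟨hva, -⟩, -⟩ : (G.Adj v a ∧ a ∈ A) ∧ v ∈ W := by simpa [s] using hv
    exact hva.symm
  have hA : n ≤ #A.toFinset := by
    obtain ⟨v, hv⟩ := hW
    rw [← Set.ncard_eq_toFinset_card']
    exact (hn v hv).trans (Set.ncard_le_ncard Set.inter_subset_right)
  obtain ⟨c, hc, hcA⟩ :=
    exists_forall_isBalanced_and_isBalanced hr hsum hε hn₀ hnΔ hlarge hA hsmall hdeg h
  exact ⟨c, fun v hv => hc ⟨v, hv⟩, hcA⟩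

theorem exists_partition_ncard_mem_Icc [Finite V] (G : SimpleGraph V) {r : κ → ℝ}
    (hr : ∀ i, 0 ≤ r i) (hsum : ∑ i, r i = 1) {ε η : ℝ} (hε : 0 ≤ ε) (hη : ∀ i, ε ≤ η * r i)
    {n Δ : ℕ} (hn₀ : 0 < n) (hnΔ : 2 * n ≤ Δ) (hΔ : ∀ v, (G.neighborSet v).ncard ≤ Δ)
    {A W : Set V} (hW : W.Nonempty) (hn : ∀ v ∈ W, n ≤ (G.neighborSet v ∩ A).ncard)
    (h : Real.exp 1 * (Fintype.card κ * (2 * Real.exp (-(2 * ε ^ 2 * n)))) *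
      (Δ * (Δ + 1) + 1) ≤ 1) :
    ∃ P : κ → Set V, (⋃ i, P i) = A ∧ Pairwise (Function.onFun Disjoint P) ∧
      (∀ v ∈ W, ∀ i, ((G.neighborSet v ∩ P i).ncard : ℝ) ∈
        Set.Icc ((1 - η) * r i * (G.neighborSet v ∩ A).ncard)
          ((1 + η) * r i * (G.neighborSet v ∩ A).ncard)) ∧
      ∀ i, ((P i).ncard : ℝ) ∈ Set.Icc ((1 - η) * r i * A.ncard) ((1 + η) * r i * A.ncard) := by
  classical
  have := Fintype.ofFinite V
  obtain ⟨c, hcW, hcA⟩ := exists_isBalanced_neighborSet_inter G hr hsum hε hn₀ hnΔ hΔ hW hn h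
  refine ⟨fun i => A ∩ c ⁻¹' {i}, ?_, ?_, fun v hv i => ?_,
    fun i => hcA.ncard_inter_preimage_mem_Icc (hη i)⟩
  · rw [← Set.inter_iUnion, ← Set.preimage_iUnion, Set.iUnion_of_singleton, Set.preimage_univ,
      Set.inter_univ]
  · exact fun i j hij => (pairwise_disjoint_fiber c hij).mono Set.inter_subset_right
      Set.inter_subset_right
  · rw [← Set.inter_assoc]
    exact (hcW v hv).ncard_inter_preimage_mem_Icc (hη i)

end Graph

section Asymptotics

open Filter

lemma eventually_mul_exp_mul_quadratic_le_one {C b : ℝ} (hC : 0 < C) (hb : 0 < b) :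
    ∀ᶠ d : ℕ in atTop, C * Real.exp (-(b * d)) * (2 * d * (2 * d + 1) + 1) ≤ 1 := by
  have hsq : ∀ᶠ d : ℕ in atTop, ‖(d : ℝ) ^ 2‖ ≤ 1 / (7 * C) * ‖Real.exp (b * d)‖ :=
    tendsto_natCast_atTop_atTop.eventually
      ((isLittleO_pow_exp_pos_mul_atTop 2 hb).bound (by positivity))
  filter_upwards [hsq, eventually_ge_atTop 1] with d hd hd₁
  have hd₁' : (1 : ℝ) ≤ d := by exact_mod_cast hd₁
  rw [Real.norm_of_nonneg (by positivity), Real.norm_of_nonneg (by positivity)] at hd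
  calc C * Real.exp (-(b * d)) * (2 * d * (2 * d + 1) + 1)
      ≤ C * Real.exp (-(b * d)) * (7 * d ^ 2) := by
        gcongr
        nlinarith
    _ ≤ C * Real.exp (-(b * d)) * (7 * (1 / (7 * C) * Real.exp (b * d))) := by gcongr
    _ = 1 := by
        rw [Real.exp_neg]
        field_simp

lemma eventually_forall_exp_one_mul_le_one {p ε δ : ℝ} (hp : 0 < p) (hε : 0 < ε) (hδ : 0 < δ) :
    ∀ᶠ d : ℕ in atTop, ∀ K n : ℕ, K * p ≤ 1 → δ * d ≤ n →
      Real.exp 1 * (K * (2 * Real.exp (-(2 * ε ^ 2 * n)))) * (2 * d * (2 * d + 1) + 1) ≤ 1 := by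
  filter_upwards [eventually_mul_exp_mul_quadratic_le_one
    (show 0 < Real.exp 1 * (p⁻¹ * 2) by positivity) (show 0 < 2 * ε ^ 2 * δ by positivity)]
    with d hd K n hK hn
  have hKp : (K : ℝ) ≤ p⁻¹ := by rwa [← one_div, le_div_iff₀ hp]
  calc Real.exp 1 * (K * (2 * Real.exp (-(2 * ε ^ 2 * n)))) * (2 * d * (2 * d + 1) + 1)
      ≤ Real.exp 1 * (p⁻¹ * (2 * Real.exp (-(2 * ε ^ 2 * (δ * d))))) *
          (2 * d * (2 * d + 1) + 1) := by gcongr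
    _ = Real.exp 1 * (p⁻¹ * 2) * Real.exp (-(2 * ε ^ 2 * δ * d)) *
          (2 * d * (2 * d + 1) + 1) := by ring_nf
    _ ≤ 1 := hd

end Asymptotics

theorem stmt_2_general (γ p : ℝ) (hγ0 : 0 < γ) (hγ : γ < 1) (hp0 : 0 < p) :
    ∃ d₀ : ℕ, ∀ d : ℕ, d₀ ≤ d →
      ∀ (κ : Type*) [Fintype κ] (r : κ → ℝ), (∀ i, p ≤ r i) → ∑ i, r i = 1 →
      ∀ (V : Type*) [Finite V] (G : SimpleGraph V), (∀ v, (G.neighborSet v).ncard ≤ 2 * d) →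
      ∀ A W : Set V, W.Nonempty →
        (∀ v ∈ W, (1 - γ) * d ≤ ((G.neighborSet v ∩ A).ncard : ℝ)) →
        ∃ P : κ → Set V, (⋃ i, P i) = A ∧ Pairwise (Function.onFun Disjoint P) ∧
          (∀ v ∈ W, ∀ i, (1 - 2 * γ) * r i * d ≤ ((G.neighborSet v ∩ P i).ncard : ℝ)) ∧
          (∀ i, (1 - γ) * r i * A.ncard ≤ ((P i).ncard : ℝ) ∧
            ((P i).ncard : ℝ) ≤ (1 + γ) * r i * A.ncard) ∧
          ((∀ v ∈ W, ((G.neighborSet v ∩ A).ncard : ℝ) ≤ (1 + γ) * d) →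
            ∀ v ∈ W, ∀ i, ((G.neighborSet v ∩ P i).ncard : ℝ) ≤ (1 + 2 * γ) * r i * d) := by
  obtain ⟨d₀, hd₀⟩ := Filter.eventually_atTop.1 <| (Filter.eventually_gt_atTop 0).and <|
    eventually_forall_exp_one_mul_le_one hp0 (show 0 < γ / 2 * p by positivity) (sub_pos.2 hγ)
  refine ⟨d₀, fun d hd κ _ r hr hsum V _ G hΔ A W hW hn => ?_⟩
  obtain ⟨hd_pos, hlocal⟩ := hd₀ d hd
  have hd_pos' : (0 : ℝ) < d := by exact_mod_cast hd_pos
  have hcard : Fintype.card κ * p ≤ 1 := by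
    simpa [hsum] using card_nsmul_le_sum univ r p fun i _ => hr i
  have hceil : ⌈(1 - γ) * d⌉₊ ≤ d := Nat.ceil_le.2 (by nlinarith)
  obtain ⟨P, hPA, hP, hPW, hPcard⟩ := exists_partition_ncard_mem_Icc G
    (fun i => hp0.le.trans (hr i)) hsum (show 0 ≤ γ / 2 * p by positivity) (η := γ / 2)
    (fun i => mul_le_mul_of_nonneg_left (hr i) (by positivity))
    (Nat.ceil_pos.2 (mul_pos (sub_pos.2 hγ) hd_pos')) (Nat.mul_le_mul_left 2 hceil) hΔ hW
    (fun v hv => Nat.ceil_le.2 (hn v hv)) (by exact_mod_cast hlocal _ _ hcard (Nat.le_ceil _))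
  refine ⟨P, hPA, hP, fun v hv i => ?_, fun i => ?_, fun hn' v hv i => ?_⟩ <;>
    have hri : 0 ≤ r i := hp0.le.trans (hr i)
  · calc (1 - 2 * γ) * r i * d ≤ (1 - γ / 2) * (1 - γ) * r i * d := by gcongr; nlinarith
      _ = (1 - γ / 2) * r i * ((1 - γ) * d) := by ring
      _ ≤ (1 - γ / 2) * r i * (G.neighborSet v ∩ A).ncard :=
          mul_le_mul_of_nonneg_left (hn v hv) (mul_nonneg (by linarith) hri)
      _ ≤ (G.neighborSet v ∩ P i).ncard := (hPW v hv i).1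
  · exact ⟨le_trans (by gcongr; linarith) (hPcard i).1,
      (hPcard i).2.trans (by gcongr; linarith)⟩
  · calc ((G.neighborSet v ∩ P i).ncard : ℝ)
        ≤ (1 + γ / 2) * r i * (G.neighborSet v ∩ A).ncard := (hPW v hv i).2
      _ ≤ (1 + γ / 2) * r i * ((1 + γ) * d) := by gcongr; exact hn' v hv
      _ = (1 + γ / 2) * (1 + γ) * r i * d := by ring
      _ ≤ (1 + 2 * γ) * r i * d := by gcongr; nlinarith

/-- Lemma 2.3 (partitioning lemma via the local lemma). -/
theorem stmt_2 (γ p : ℝ) (hγ0 : 0 < γ) (hγ : γ ≤ 1 / 2) (hp0 : 0 < p) (hp : p ≤ 1 / 2) :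
    ∃ d₀ : ℕ, ∀ d : ℕ, d₀ ≤ d →
      ∀ (m : ℕ) (pp : Fin m → ℝ), (∀ i, p ≤ pp i) → (∑ i, pp i) = 1 →
      ∀ (Vt : Type*) [Fintype Vt] (G : SimpleGraph Vt),
        (∀ v : Vt, (G.neighborSet v).ncard ≤ 2 * d) →
        ∀ A Vs : Set Vt, A.Nonempty → Vs.Nonempty →
        (∀ v ∈ Vs, (1 - γ) * d ≤ ((G.neighborSet v ∩ A).ncard : ℝ)) →
        ((∃ Pa : Fin m → Set Vt,
            (⋃ i, Pa i) = A ∧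
            Pairwise (Function.onFun Disjoint Pa) ∧
            (∀ v ∈ Vs, ∀ i, (1 - 2 * γ) * pp i * d ≤ ((G.neighborSet v ∩ Pa i).ncard : ℝ)) ∧
            (∀ i, (1 - γ) * pp i * A.ncard ≤ ((Pa i).ncard : ℝ) ∧
              ((Pa i).ncard : ℝ) ≤ (1 + γ) * pp i * A.ncard)) ∧
          ((∀ v ∈ Vs, ((G.neighborSet v ∩ A).ncard : ℝ) ≤ (1 + γ) * d) →
            ∃ Pa : Fin m → Set Vt,
              (⋃ i, Pa i) = A ∧
              Pairwise (Function.onFun Disjoint Pa) ∧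
              (∀ v ∈ Vs, ∀ i, (1 - 2 * γ) * pp i * d ≤ ((G.neighborSet v ∩ Pa i).ncard : ℝ)) ∧
              (∀ i, (1 - γ) * pp i * A.ncard ≤ ((Pa i).ncard : ℝ) ∧
                ((Pa i).ncard : ℝ) ≤ (1 + γ) * pp i * A.ncard) ∧
              (∀ v ∈ Vs, ∀ i,
                ((G.neighborSet v ∩ Pa i).ncard : ℝ) ≤ (1 + 2 * γ) * pp i * d))) := by
  obtain ⟨d₀, hd₀⟩ := stmt_2_general γ p hγ0 (hγ.trans_lt (by norm_num)) hp0
  refine ⟨d₀, fun d hd m pp hpp hsum Vt _ G hΔ A Vs _ hVs hdeg => ?_⟩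
  obtain ⟨Pa, hA, hdisj, hA1, hA2, hA3⟩ := hd₀ d hd (Fin m) pp hpp hsum Vt G hΔ A Vs hVs hdeg
  exact ⟨⟨Pa, hA, hdisj, hA1, hA2⟩, fun hdeg' => ⟨Pa, hA, hdisj, hA1, hA2, hA3 hdeg'⟩⟩
end
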